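/- arXiv:1811.07865 — 2 statements merged into one kernel-verified Lean document; each statement's English description precedes it below -/
import Mathlib

section
/- Let V ⊆ ℂ^n be an irreducible variety of dimension d, let 1 ≤ k ≤ n−d, and let W be an irreducible variety of dimension n−k containing V. Then deg(W) ≥ c(n)·δ_1(V)·δ_2(V)⋯δ_k(V) for a constant c(n) > 0 depending only on n. -/
open MvPolynomial Set

noncomputable section

namespace Paper

variable (n : ℕ)

/-- The zero locus in `ℂⁿ` of a set of polynomials. -/
def zeroLocus (I : Set (MvPolynomial (Fin n) ℂ)) : Set (Fin n → ℂ) :=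
  {x | ∀ f ∈ I, eval x f = 0}

/-- A subset of `ℂⁿ` is algebraic if it is the zero locus of a set of polynomials. -/
def IsAlgebraicSet (V : Set (Fin n → ℂ)) : Prop :=
  ∃ I : Set (MvPolynomial (Fin n) ℂ), V = zeroLocus n I

/-- An irreducible (affine) variety in `ℂⁿ`: a nonempty algebraic set that is not covered
by two algebraic sets unless it is contained in one of them. -/
def IsIrredVariety (V : Set (Fin n → ℂ)) : Prop :=
  IsAlgebraicSet n V ∧ V.Nonempty ∧
    ∀ V₁ V₂ : Set (Fin n → ℂ), IsAlgebraicSet n V₁ → IsAlgebraicSet n V₂ →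
      V ⊆ V₁ ∪ V₂ → V ⊆ V₁ ∨ V ⊆ V₂

/-- There is a strictly increasing chain of `d + 1` irreducible varieties inside `V`. -/
def HasChain (V : Set (Fin n → ℂ)) (d : ℕ) : Prop :=
  ∃ W : Fin (d + 1) → Set (Fin n → ℂ),
    (∀ i, IsIrredVariety n (W i)) ∧ (∀ i j : Fin (d + 1), i < j → W i ⊂ W j) ∧
      W (Fin.last d) ⊆ V

/-- The (Krull) dimension of a subset of `ℂⁿ`, as the length of the longest chain of
irreducible subvarieties. -/
def dim (V : Set (Fin n → ℂ)) : ℕ := sSup {d | HasChain n V d}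

/-- `W` is an irreducible component of `X`: an irreducible subvariety that is maximal among
irreducible subvarieties of `X`. -/
def IsIrredComponent (W X : Set (Fin n → ℂ)) : Prop :=
  IsIrredVariety n W ∧ W ⊆ X ∧
    ∀ W', IsIrredVariety n W' → W ⊆ W' → W' ⊆ X → W' = W

/-- The degree of an irreducible variety `V ⊆ ℂⁿ` of dimension `d` (i.e. the degree of its
projective closure): the largest finite number of points in which an affine-linear subspace of
dimension `n - d` meets `V`. -/
def degree (V : Set (Fin n → ℂ)) : ℕ :=
  sSup { m | ∃ L : AffineSubspace ℂ (Fin n → ℂ),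
    Module.finrank ℂ L.direction = n - dim n V ∧ (V ∩ ↑L).Finite ∧ (V ∩ ↑L).ncard = m }

/-- The degree of an algebraic set: the sum of the degrees of its irreducible components. -/
def degreeSum (X : Set (Fin n → ℂ)) : ℕ :=
  ∑ᶠ W ∈ {W | IsIrredComponent n W X}, degree n W

/-- The maximal dimension of an irreducible component of `X` containing `V` equals `e`. -/
def MaxCompDimEq (X V : Set (Fin n → ℂ)) (e : ℕ) : Prop :=
  (∃ W, IsIrredComponent n W X ∧ V ⊆ W ∧ dim n W = e) ∧
    ∀ W, IsIrredComponent n W X → V ⊆ W → dim n W ≤ e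

/-- The partial degrees `δ_i(V)` of an irreducible variety `V`:  the minimal `δ` such that there
are polynomials of degree at most `δ` cutting out an algebraic set containing `V` whose
irreducible components containing `V` have maximal dimension `n - i`.  By convention
`δ_0(V) = 0`. -/
def partialDeg (V : Set (Fin n → ℂ)) (i : ℕ) : ℕ :=
  if i = 0 then 0
  else sInf { δ | ∃ I : Finset (MvPolynomial (Fin n) ℂ),
    (∀ f ∈ I, f.totalDegree ≤ δ) ∧ V ⊆ zeroLocus n ↑I ∧
      MaxCompDimEq n (zeroLocus n ↑I) V (n - i) }

/-- The partial degrees as extended naturals, with the convention `δ_i(V) = ∞` for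
`i > n - dim V`. -/
def partialDegE (V : Set (Fin n → ℂ)) (i : ℕ) : ℕ∞ :=
  if i ≤ n - dim n V then (partialDeg n V i : ℕ∞) else ⊤

/-- `δ(V)` for an irreducible variety `V`: the minimal `δ` such that `V` is an irreducible
component of the zero set of a finite family of polynomials of degree at most `δ`. -/
def deltaIrr (V : Set (Fin n → ℂ)) : ℕ :=
  sInf { δ | ∃ I : Finset (MvPolynomial (Fin n) ℂ),
    (∀ f ∈ I, f.totalDegree ≤ δ) ∧ IsIrredComponent n V (zeroLocus n ↑I) }

/-- `δ(V)` for a general algebraic set `V`: the minimal `δ` such that every irreducible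
component of `V` is an irreducible component of the zero set of a finite family of polynomials
of degree at most `δ`. -/
def deltaSet (V : Set (Fin n → ℂ)) : ℕ :=
  sInf { δ | ∃ I : Finset (MvPolynomial (Fin n) ℂ),
    (∀ f ∈ I, f.totalDegree ≤ δ) ∧
      ∀ W, IsIrredComponent n W V → IsIrredComponent n W (zeroLocus n ↑I) }

/-- An algebraic set all of whose irreducible components have dimension `d`. -/
def IsAlgSetOfDim (V : Set (Fin n → ℂ)) (d : ℕ) : Prop :=
  IsAlgebraicSet n V ∧ V.Nonempty ∧ ∀ W, IsIrredComponent n W V → dim n W = d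

/-- `Δ_i(V) = max (deg V / (δ_{i+1}(V) ⋯ δ_{n-d}(V))) 1`. -/
def Delta (V : Set (Fin n → ℂ)) (i : ℕ) : ℝ :=
  max ((degree n V : ℝ) / ∏ j ∈ Finset.Icc (i + 1) (n - dim n V), (partialDeg n V j : ℝ)) 1

/-- `i` is admissible with respect to `V` if `δ_{i+1}(V) > 2 i δ_i(V)` (with the convention
`δ_i(V) = ∞` for `i > n - dim V`). -/
def Admissible (V : Set (Fin n → ℂ)) (i : ℕ) : Prop :=
  ((2 * i : ℕ) : ℕ∞) * partialDegE n V i < partialDegE n V (i + 1)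

/-- The interval `ℛ_i(V) = [c₁ δ_i(V)^{n-i} Δ_i(V), (c₀/2) δ_{i+1}(V)^{n-i} Δ_i(V)]`,
where `δ_{n-d+1}(V) = ∞` makes the last interval a half-line. -/
def RSet (c0 c1 : ℝ) (V : Set (Fin n → ℂ)) (i : ℕ) : Set ℝ :=
  if i = n - dim n V then
    Set.Ici (c1 * (partialDeg n V i : ℝ) ^ (n - i) * Delta n V i)
  else
    Set.Icc (c1 * (partialDeg n V i : ℝ) ^ (n - i) * Delta n V i)
      ((c0 / 2) * (partialDeg n V (i + 1) : ℝ) ^ (n - i) * Delta n V i)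

/-- The interval `ℛ^l_{s,τ}(V) = [τ δ_s(V)^{n-(s+l)} Δ_s(V), τ δ_{s+1}(V)^{n-(s+l)} Δ_s(V)]`,
where `δ_{n-d+1}(V) = ∞` makes the last interval a half-line. -/
def RlSet (τ : ℝ) (l : ℕ) (V : Set (Fin n → ℂ)) (s : ℕ) : Set ℝ :=
  if s = n - dim n V then
    Set.Ici (τ * (partialDeg n V s : ℝ) ^ (n - (s + l)) * Delta n V s)
  else
    Set.Icc (τ * (partialDeg n V s : ℝ) ^ (n - (s + l)) * Delta n V s)
      (τ * (partialDeg n V (s + 1) : ℝ) ^ (n - (s + l)) * Delta n V s)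

/-- The ideal `I(V)` of polynomials vanishing on `V ⊆ ℂⁿ`. -/
def vanishingIdeal (V : Set (Fin n → ℂ)) : Ideal (MvPolynomial (Fin n) ℂ) where
  carrier := {f | ∀ x ∈ V, eval x f = 0}
  add_mem' := by
    intro a b ha hb x hx
    simp [ha x hx, hb x hx]
  zero_mem' := by
    intro x hx
    simp
  smul_mem' := by
    intro c f hf x hx
    simp [smul_eq_mul, hf x hx]

/-- The ideal `I_ℝ(V)` of real polynomials vanishing on `V ⊆ ℂⁿ`. -/
def vanishingIdealR (V : Set (Fin n → ℂ)) : Ideal (MvPolynomial (Fin n) ℝ) :=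
  (vanishingIdeal n V).comap (MvPolynomial.map (algebraMap ℝ ℂ))

/-- The affine Hilbert function `H_{I(V)}(m) = dim_ℂ ℂ[x]_{≤ m} / I(V)_{≤ m}`, realised as the
dimension of the image of the space of polynomials of total degree at most `m` in the quotient
ring `ℂ[x]/I(V)`. -/
def hilbert (V : Set (Fin n → ℂ)) (m : ℕ) : ℕ :=
  Module.finrank ℂ
    (Submodule.map (Ideal.Quotient.mkₐ ℂ (vanishingIdeal n V)).toLinearMap
      (restrictTotalDegree (Fin n) ℂ m))

/-- The real affine Hilbert function `H_{I(V),ℝ}(m) = dim_ℝ ℝ[x]_{≤ m} / I_ℝ(V)_{≤ m}`. -/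
def hilbertR (V : Set (Fin n → ℂ)) (m : ℕ) : ℕ :=
  Module.finrank ℝ
    (Submodule.map (Ideal.Quotient.mkₐ ℝ (vanishingIdealR n V)).toLinearMap
      (restrictTotalDegree (Fin n) ℝ m))

/-- The inclusion `ℝⁿ → ℂⁿ`. -/
def toC (x : Fin n → ℝ) : Fin n → ℂ := fun i => (x i : ℂ)

/-- The set of real points of `V ⊆ ℂⁿ`. -/
def realPts (V : Set (Fin n → ℂ)) : Set (Fin n → ℝ) := {x | toC n x ∈ V}

/-- The real zero set of a real polynomial. -/
def zeroSetR (g : MvPolynomial (Fin n) ℝ) : Set (Fin n → ℝ) := {x | eval x g = 0}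

/-- The zero locus of the polynomials `P 1, …, P i` (the first `i` members of a tuple of
polynomials indexed from `1`). -/
def zeroLocusUpTo (P : ℕ → MvPolynomial (Fin n) ℂ) (i : ℕ) : Set (Fin n → ℂ) :=
  zeroLocus n {f | ∃ j : ℕ, 1 ≤ j ∧ j ≤ i ∧ f = P j}

/-- `V'` is an `(n-s)`-minimal variety of the irreducible variety `V`. -/
def IsMinimalVariety (V V' : Set (Fin n → ℂ)) (s : ℕ) : Prop :=
  IsIrredVariety n V' ∧ V ⊆ V' ∧ dim n V' = n - s ∧
    ∀ f ∈ vanishingIdeal n V, f ∉ vanishingIdeal n V' →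
      partialDegE n V (s + 1) ≤ (f.totalDegree : ℕ∞)

/-- `S` is `(k,b)`-free with respect to `T`, for the incidence relation `R`. -/
def KBFree {α β : Type*} (R : α → β → Prop) (S : Finset α) (T : Finset β) (k b : ℕ) : Prop :=
  ¬ ∃ (P : Finset α) (B : Finset β), P ⊆ S ∧ B ⊆ T ∧ P.card = k ∧ B.card = b ∧
      ∀ s ∈ P, ∀ t ∈ B, R s t

/-- The number of incidences between a finite set of points and a finite family of sets. -/
def incCountAbs {α : Type*} (S : Finset α) (T : Finset (Set α)) : ℕ :=
  ∑ t ∈ T, (↑S ∩ t).ncard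

/-- The number of incidences between a finite set of real points and a finite family of
subsets of `ℂⁿ`. -/
def incCount (S : Finset (Fin n → ℝ)) (T : Finset (Set (Fin n → ℂ))) : ℕ :=
  ∑ t ∈ T, (↑S ∩ toC n ⁻¹' t).ncard

/-- The total degree `deg T = ∑_{t ∈ T} deg t` of a finite family of algebraic sets. -/
def degFamily (T : Finset (Set (Fin n → ℂ))) : ℕ := ∑ t ∈ T, degreeSum n t

/-- The total degree of a finite family of irreducible varieties. -/
def degFamilyIrred (T : Finset (Set (Fin n → ℂ))) : ℕ := ∑ t ∈ T, degree n t

/-- `α_k(d)`. -/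
def alpha (k d : ℕ) : ℝ :=
  if k = 1 ∧ d = 1 then 0 else (k : ℝ) * ((d : ℝ) - 1) / ((d : ℝ) * (k : ℝ) - 1)

/-- `β_k(d)`. -/
def beta (k d : ℕ) : ℝ :=
  if k = 1 ∧ d = 1 then 1 else (d : ℝ) * ((k : ℝ) - 1) / ((d : ℝ) * (k : ℝ) - 1)

/-- `τ_d(b,k) = b^{1-β_k(d)} k^{1-α_k(d)}`. -/
def tauC (d b k : ℕ) : ℝ := (b : ℝ) ^ (1 - beta k d) * (k : ℝ) ^ (1 - alpha k d)

/-- The Chardin–Philippon property of the constant `c₀`: for every pure-dimensional algebraic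
set `W ⊆ ℂⁿ` and every `m ≥ 2 (n - dim W) δ(W)` one has `H_{I(W)}(m) ≥ c₀ m^{dim W} deg W`. -/
def ChardinPhilippon (c0 : ℝ) : Prop :=
  ∀ (W : Set (Fin n → ℂ)) (e : ℕ), IsAlgSetOfDim n W e →
    ∀ m : ℕ, 2 * (n - e) * deltaSet n W ≤ m →
      c0 * (m : ℝ) ^ e * (degreeSum n W : ℝ) ≤ (hilbert n W m : ℝ)

/-- The defining property of the constant `c₁`: for every irreducible variety `V`, every
positive integer lies in some interval `ℛ_i(V)` with `i` admissible with respect to `V`. -/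
def CoversPositiveIntegers (c0 c1 : ℝ) : Prop :=
  ∀ V : Set (Fin n → ℂ), IsIrredVariety n V →
    ∀ m : ℕ, 0 < m → ∃ i, Admissible n V i ∧ (m : ℝ) ∈ RSet n c0 c1 V i

/-- `i_V(M)`: the smallest admissible `i` such that `M^{n-i} Δ_i(V) ∈ ℛ_i(V)`. -/
def iV (c0 c1 : ℝ) (V : Set (Fin n → ℂ)) (M : ℕ) : ℕ :=
  sInf {i | Admissible n V i ∧ (M : ℝ) ^ (n - i) * Delta n V i ∈ RSet n c0 c1 V i}

/-- A real polynomial bisects a finite set `S ⊆ ℝⁿ` if it is positive on at most half of `S`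
and negative on at most half of `S`. -/
def Bisects (g : MvPolynomial (Fin n) ℝ) (S : Finset (Fin n → ℝ)) : Prop :=
  ((↑S ∩ {x | 0 < eval x g}).ncard : ℝ) ≤ (S.card : ℝ) / 2 ∧
    ((↑S ∩ {x | eval x g < 0}).ncard : ℝ) ≤ (S.card : ℝ) / 2

/-- The set of `r`-rich points of a family `T`: points lying in at least `r` members of `T`. -/
def richPts (T : Finset (Set (Fin n → ℂ))) (r : ℕ) : Set (Fin n → ℂ) :=
  {x | r ≤ ({t | t ∈ T ∧ x ∈ t} : Set (Set (Fin n → ℂ))).ncard}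

/-- A real hypersurface of degree at most `D`: the real zero set of a nonzero real polynomial
of degree at most `D`. -/
def IsRealHypersurfaceDegLE (t : Set (Fin n → ℝ)) (D : ℕ) : Prop :=
  ∃ p : MvPolynomial (Fin n) ℝ, p ≠ 0 ∧ t = zeroSetR n p ∧ p.totalDegree ≤ D

/-- Lexicographic comparison of the tuples `(f 1, …, f m)` and `(g 1, …, g m)`. -/
def LexLE (m : ℕ) (f g : ℕ → ℕ) : Prop :=
  (∀ j ∈ Finset.Icc 1 m, f j = g j) ∨
    ∃ i ∈ Finset.Icc 1 m, (∀ j, 1 ≤ j → j < i → f j = g j) ∧ f i < g i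

/-!
Let `H_V(m)` be the affine Hilbert function of `V`. Noether normalization by linear forms, carried
out compatibly with degrees, shows that `H_Y(m) / m ^ dim Y` is almost increasing in `m` for an
irreducible variety `Y`, up to a constant depending on `n`, and that `H_W(m)` is at most
`deg W * (m + 1) ^ dim W`.

Call `Y ⊇ V` an envelope of `V` at degree `m` if it is irreducible and every polynomial of degree at
most `m` vanishing on `V` vanishes on `Y`, so that `H_V` and `H_Y` agree up to degree `m`. Let
`t_i ≥ δ_i(V)` be the least degree at which all envelopes have codimension at least `i`. Between
`t_j` and `t_{j+1}` there are envelopes of codimension `j`, so there `H_V(m)` grows at least like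
`m ^ (n - j)`. Multiplying these growth rates up to `m ≈ t_k` gives
`H_V(m) ≥ c(n) * t_1 ⋯ t_k * m ^ (n - k)`, while `V ⊆ W` gives
`H_V(m) ≤ H_W(m) ≤ deg W * (m + 1) ^ (n - k)`.
-/

section Filtration

variable {K A σ : Type*} [CommRing K] [CommRing A] [Algebra K A]

variable (K) in
/-- The affine-linear forms in a family `x` of elements of a `K`-algebra: the span of `1` and of
the `x i`. Its powers form the filtration of `K[x]` by degree in `x`. -/
def affineForms (x : σ → A) : Submodule K A :=
  1 ⊔ Submodule.span K (range x)

lemma one_le_affineForms (x : σ → A) : 1 ≤ affineForms K x :=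
  le_sup_left

lemma span_range_le_affineForms (x : σ → A) : Submodule.span K (range x) ≤ affineForms K x :=
  le_sup_right

lemma apply_mem_affineForms (x : σ → A) (i : σ) : x i ∈ affineForms K x :=
  span_range_le_affineForms x (Submodule.subset_span ⟨i, rfl⟩)

lemma affineForms_pow_mono (x : σ → A) : Monotone fun m => affineForms K x ^ m :=
  fun _ _ h => pow_le_pow_right₀ (one_le_affineForms x) h

lemma affineForms_le {τ : Type*} {x : σ → A} {y : τ → A}
    (h : ∀ i, x i ∈ Submodule.span K (range y)) : affineForms K x ≤ affineForms K y :=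
  sup_le_sup_left (Submodule.span_le.2 (range_subset_iff.2 h)) _

lemma affineForms_fg [Finite σ] (x : σ → A) : (affineForms K x).FG := by
  rw [affineForms, Submodule.one_eq_span]
  exact (Submodule.fg_span_singleton 1).sup (Submodule.fg_span (finite_range x))

instance [Finite σ] (x : σ → A) (m : ℕ) : Module.Finite K ↥(affineForms K x ^ m) :=
  Module.Finite.iff_fg.2 ((affineForms_fg x).pow m)

lemma map_affineForms {B : Type*} [CommRing B] [Algebra K B] (φ : A →ₐ[K] B) (x : σ → A) :
    (affineForms K x).map φ.toLinearMap = affineForms K (φ ∘ x) := by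
  rw [affineForms, affineForms, Submodule.map_sup, Submodule.map_one, Submodule.map_span,
    range_comp]
  rfl

lemma aeval_monomial_mem_pow {P : Submodule K A} {x : σ → A} (hx : ∀ i, x i ∈ P) (d : σ →₀ ℕ) :
    aeval x (monomial d (1 : K)) ∈ P ^ d.degree := by
  induction d using Finsupp.induction_linear with
  | zero => simp [Submodule.one_le.1 (le_refl (1 : Submodule K A))]
  | add d d' hd hd' =>
    rw [← one_mul (1 : K), ← monomial_mul, map_mul, map_add, pow_add]
    exact Submodule.mul_mem_mul hd hd'
  | single i k =>
    rw [aeval_monomial, map_one, one_mul, Finsupp.prod_single_index (by simp),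
      Finsupp.degree_single]
    exact Submodule.pow_mem_pow _ (hx i) k

lemma degree_le_totalDegree {p : MvPolynomial σ K} {d : σ →₀ ℕ} (hd : d ∈ p.support) :
    d.degree ≤ p.totalDegree :=
  Finsupp.degree_apply d ▸ le_totalDegree hd

lemma aeval_mem_affineForms_pow (x : σ → A) (p : MvPolynomial σ K) :
    aeval x p ∈ affineForms K x ^ p.totalDegree := by
  rw [p.as_sum, map_sum, ← p.as_sum]
  refine Submodule.sum_mem _ fun d hd => ?_
  rw [← mul_one (coeff d p), ← smul_eq_mul, ← smul_monomial, map_smul]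
  exact Submodule.smul_mem _ _ (affineForms_pow_mono x (degree_le_totalDegree hd)
    (aeval_monomial_mem_pow (apply_mem_affineForms x) d))

lemma affineForms_X_pow (m : ℕ) :
    affineForms K (X : σ → MvPolynomial σ K) ^ m = restrictTotalDegree σ K m := by
  refine le_antisymm ?_ fun p hp => ?_
  · induction m with
    | zero =>
      rw [pow_zero, Submodule.one_le]
      simp [mem_restrictTotalDegree]
    | succ m ih =>
      have affine_le : affineForms K (X : σ → MvPolynomial σ K) ≤ restrictTotalDegree σ K 1 :=
        sup_le (Submodule.one_le.2 (by simp [mem_restrictTotalDegree])) <|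
          Submodule.span_le.2 <| range_subset_iff.2 fun i =>
            (mem_restrictTotalDegree _ _ _).2 ((totalDegree_monomial_le _ _).trans (by simp))
      rw [pow_succ]
      refine (mul_le_mul' ih affine_le).trans (Submodule.mul_le.2 fun p hp q hq => ?_)
      rw [mem_restrictTotalDegree] at *
      exact (totalDegree_mul p q).trans (add_le_add hp hq)
  · have := aeval_mem_affineForms_pow (X : σ → MvPolynomial σ K) p
    rw [aeval_X_left_apply] at this
    exact affineForms_pow_mono X ((mem_restrictTotalDegree _ _ _).1 hp) this

lemma map_restrictTotalDegree (φ : MvPolynomial σ K →ₐ[K] A) (m : ℕ) :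
    (restrictTotalDegree σ K m).map φ.toLinearMap = affineForms K (φ ∘ X) ^ m := by
  rw [← affineForms_X_pow, Submodule.map_pow, map_affineForms]

end Filtration

section NoetherNormalization

lemma exists_eval_ne_zero {R σ : Type*} [CommRing R] [IsDomain R] [Infinite R]
    {p : MvPolynomial σ R} (hp : p ≠ 0) : ∃ a, eval a p ≠ 0 := by
  contrapose! hp
  exact MvPolynomial.funext fun a => by rw [hp, map_zero]

lemma homogeneousComponent_totalDegree_ne_zero {R σ : Type*} [CommSemiring R]
    {p : MvPolynomial σ R} (hp : p ≠ 0) : homogeneousComponent p.totalDegree p ≠ 0 := by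
  obtain ⟨d, hd, hdeg⟩ := Finset.exists_mem_eq_sup p.support (support_nonempty.2 hp)
    fun d => d.sum fun _ k => k
  refine ne_zero_iff.2 ⟨d, ?_⟩
  have degree_eq : d.degree = p.totalDegree := (Finsupp.degree_apply d).trans hdeg.symm
  rw [coeff_homogeneousComponent, if_pos degree_eq]
  exact mem_support_iff.1 hd

variable {K A σ : Type*} [CommRing K] [CommRing A] [Algebra K A]

lemma exists_eq_single_add_of_degree_eq_succ {d : σ →₀ ℕ} {k : ℕ} (hd : d.degree = k + 1) :
    ∃ i d', d = Finsupp.single i 1 + d' ∧ d'.degree = k := by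
  obtain ⟨i, hi⟩ : ∃ i, d i ≠ 0 :=
    Finsupp.ne_iff.1 fun h : d = 0 => by simp [h] at hd
  have single_le : Finsupp.single i 1 ≤ d := Finsupp.single_le_iff.2 (Nat.one_le_iff_ne_zero.2 hi)
  refine ⟨i, d - Finsupp.single i 1, (add_tsub_cancel_of_le single_le).symm, ?_⟩
  rw [← add_tsub_cancel_of_le single_le, map_add, Finsupp.degree_single] at hd
  lia

section Reduction

variable {E F : Submodule K A} {w : A}

lemma pow_le_mul_pow_sup_span_pow (hF : F ≤ E ⊔ Submodule.span K {w}) (hw : w ∈ F)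
    (k : ℕ) : F ^ (k + 1) ≤ E * F ^ k ⊔ Submodule.span K {w ^ (k + 1)} := by
  induction k with
  | zero => simpa using hF
  | succ k ih =>
    rw [pow_succ' F (k + 1)]
    refine (mul_le_mul_left hF _).trans ?_
    rw [Submodule.sup_mul]
    refine sup_le le_sup_left ((mul_le_mul_right ih _).trans ?_)
    rw [Submodule.mul_sup, Submodule.span_mul_span, singleton_mul_singleton, ← pow_succ']
    refine sup_le_sup_right ?_ _
    rw [mul_left_comm, pow_succ' F k]
    exact mul_le_mul_right (mul_le_mul_left ((Submodule.span_singleton_le_iff_mem _ _).2 hw) _) _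

lemma pow_le_pow_mul_pow (hF : F ≤ E ⊔ Submodule.span K {w}) (hw : w ∈ F)
    (h1 : 1 ≤ F) {k : ℕ} (hk : w ^ (k + 1) ∈ E * F ^ k) (M : ℕ) : F ^ M ≤ F ^ k * E ^ M := by
  have reduction : F * F ^ k ≤ E * F ^ k := by
    rw [← pow_succ']
    exact (pow_le_mul_pow_sup_span_pow hF hw k).trans
      (sup_le le_rfl ((Submodule.span_singleton_le_iff_mem _ _).2 hk))
  induction M with
  | zero => simpa using one_le_pow_of_one_le' h1 k
  | succ M ih =>
    calc F ^ (M + 1) = F * F ^ M := pow_succ' ..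
      _ ≤ F * (F ^ k * E ^ M) := mul_le_mul_right ih _
      _ = F * F ^ k * E ^ M := (mul_assoc ..).symm
      _ ≤ E * F ^ k * E ^ M := mul_le_mul_left reduction _
      _ = F ^ k * E ^ (M + 1) := by rw [pow_succ]; ac_rfl

variable {x : σ → A} {v : σ → K}

lemma aeval_monomial_sub_smul_pow_mem (hE : E ≤ F) (hw : w ∈ F) (hx : ∀ i, x i - v i • w ∈ E)
    {d : σ →₀ ℕ} {k : ℕ} (hd : d.degree = k + 1) :
    aeval x (monomial d (1 : K)) - eval v (monomial d 1) • w ^ (k + 1) ∈ E * F ^ k := by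
  have apply_mem (i : σ) : x i ∈ F := by
    simpa using F.add_mem (hE (hx i)) (F.smul_mem (v i) hw)
  induction k generalizing d with
  | zero =>
    obtain ⟨i, d', rfl, hd'⟩ := exists_eq_single_add_of_degree_eq_succ hd
    obtain rfl := (Finsupp.degree_eq_zero_iff d').1 hd'
    simpa [aeval_monomial, eval_monomial] using hx i
  | succ k ih =>
    obtain ⟨i, d', rfl, hd'⟩ := exists_eq_single_add_of_degree_eq_succ hd
    have split : aeval x (monomial (Finsupp.single i 1 + d') (1 : K)) -
        eval v (monomial (Finsupp.single i 1 + d') 1) • w ^ (k + 1 + 1) =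
        (x i - v i • w) * aeval x (monomial d' (1 : K)) +
          v i • (w * (aeval x (monomial d' (1 : K)) - eval v (monomial d' 1) • w ^ (k + 1))) := by
      rw [← one_mul (1 : K), ← monomial_mul, map_mul, map_mul, ← X, aeval_X, eval_X]
      simp only [one_mul, Algebra.smul_def, map_mul]
      ring
    rw [split]
    refine add_mem (Submodule.mul_mem_mul (hx i) (hd' ▸ aeval_monomial_mem_pow apply_mem d'))
      (Submodule.smul_mem _ _ ?_)
    rw [pow_succ', mul_left_comm]
    exact Submodule.mul_mem_mul hw (ih hd')

lemma aeval_sub_smul_pow_mem (h1 : 1 ≤ E) (hE : E ≤ F) (hw : w ∈ F)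
    (hx : ∀ i, x i - v i • w ∈ E) {p : MvPolynomial σ K} {k : ℕ} (hp : p.totalDegree ≤ k + 1) :
    aeval x p - eval v (homogeneousComponent (k + 1) p) • w ^ (k + 1) ∈ E * F ^ k := by
  have apply_mem (i : σ) : x i ∈ F := by
    simpa using F.add_mem (hE (hx i)) (F.smul_mem (v i) hw)
  have lower_mem {d : σ →₀ ℕ} (hd : d.degree ≤ k) :
      aeval x (monomial d (1 : K)) ∈ E * F ^ k := by
    rw [← one_mul (aeval x (monomial d (1 : K)))]
    exact Submodule.mul_mem_mul (Submodule.one_le.1 h1)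
      (pow_le_pow_right₀ (h1.trans hE) hd (aeval_monomial_mem_pow apply_mem d))
  have monomial_eq_smul (d : σ →₀ ℕ) : monomial d (coeff d p) = coeff d p • monomial d 1 := by
    rw [smul_monomial, smul_eq_mul, mul_one]
  rw [homogeneousComponent_apply, Finset.sum_filter, map_sum, Finset.sum_smul]
  nth_rw 1 [p.as_sum]
  rw [map_sum, ← Finset.sum_sub_distrib]
  refine Submodule.sum_mem _ fun d hd => ?_
  rw [monomial_eq_smul, map_smul]
  split_ifs with hdk
  · rw [smul_eval, mul_smul, ← smul_sub]
    exact Submodule.smul_mem _ _ (aeval_monomial_sub_smul_pow_mem hE hw hx hdk)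
  · rw [map_zero, zero_smul, sub_zero]
    have := degree_le_totalDegree hd
    exact Submodule.smul_mem _ _ (lower_mem (by lia))

end Reduction

variable {τ : Type*}

variable (K) in
/-- Linear Noether normalization with degree control: `A` is finite over `K[y]`, where the `y i`
are algebraically independent linear forms in the `x i`, and this holds degree by degree. -/
structure IsLinearNormalization (x : σ → A) (y : τ → A) : Prop where
  algebraicIndependent : AlgebraicIndependent K y
  mem_span (i : τ) : y i ∈ Submodule.span K (range x)
  exists_fg : ∃ C : Submodule K A, C.FG ∧ ∀ M, affineForms K x ^ M ≤ C * affineForms K y ^ M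

lemma IsLinearNormalization.mem_affineForms {x : σ → A} {y : τ → A}
    (h : IsLinearNormalization K x y) (i : τ) : y i ∈ affineForms K x :=
  span_range_le_affineForms x (h.mem_span i)

lemma IsLinearNormalization.refl {x : σ → A} (hx : AlgebraicIndependent K x) :
    IsLinearNormalization K x x where
  algebraicIndependent := hx
  mem_span i := Submodule.subset_span ⟨i, rfl⟩
  exists_fg := ⟨1, Submodule.one_eq_span (R := K) (A := A) ▸ Submodule.fg_span_singleton 1,
    fun _ => (one_mul _).ge⟩

lemma IsLinearNormalization.of_pow_le {ρ : Type*} {x : σ → A} {z : ρ → A} {y : τ → A}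
    (h : IsLinearNormalization K z y) (hz : ∀ i, z i ∈ Submodule.span K (range x))
    {C : Submodule K A} (hC : C.FG) (hle : ∀ M, affineForms K x ^ M ≤ C * affineForms K z ^ M) :
    IsLinearNormalization K x y where
  algebraicIndependent := h.algebraicIndependent
  mem_span i := Submodule.span_le.2 (range_subset_iff.2 hz) (h.mem_span i)
  exists_fg := by
    obtain ⟨C', hC', hle'⟩ := h.exists_fg
    refine ⟨C * C', hC.mul hC', fun M => (hle M).trans ?_⟩
    rw [mul_assoc]
    exact mul_le_mul_right (hle' M) _

end NoetherNormalization

section NoetherNormalizationField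

variable {K A : Type*} [Field K] [Infinite K] [CommRing A] [Nontrivial A] [Algebra K A]

lemma exists_affineForms_pow_le {m : ℕ} {x : Fin (m + 1) → A}
    (hx : ¬ AlgebraicIndependent K x) :
    ∃ z : Fin m → A, (∀ i, z i ∈ Submodule.span K (range x)) ∧
      ∃ C : Submodule K A, C.FG ∧ ∀ M, affineForms K x ^ M ≤ C * affineForms K z ^ M := by
  obtain ⟨f, hf, hf0⟩ : ∃ f, aeval x f = 0 ∧ f ≠ 0 := by
    simpa [algebraicIndependent_iff] using hx
  obtain ⟨k, hk⟩ : ∃ k, f.totalDegree = k + 1 := by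
    refine Nat.exists_eq_succ_of_ne_zero fun h0 => hf0 ?_
    rw [totalDegree_eq_zero_iff_eq_C] at h0
    rw [h0, aeval_C, map_eq_zero_iff _ (algebraMap K A).injective] at hf
    rw [h0, hf, map_zero]
  obtain ⟨v, hv⟩ := exists_eval_ne_zero
    (mul_ne_zero (homogeneousComponent_totalDegree_ne_zero hf0) (X_ne_zero 0))
  rw [map_mul, eval_X, hk] at hv
  have hv0 : v 0 ≠ 0 := right_ne_zero_of_mul hv
  let w : A := (v 0)⁻¹ • x 0
  let z : Fin m → A := fun j => x j.succ - v j.succ • w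
  have w_mem : w ∈ Submodule.span K (range x) :=
    Submodule.smul_mem _ _ (Submodule.subset_span ⟨0, rfl⟩)
  have z_mem (j : Fin m) : z j ∈ Submodule.span K (range x) :=
    sub_mem (Submodule.subset_span ⟨_, rfl⟩) (Submodule.smul_mem _ _ w_mem)
  have sub_mem_forms : ∀ i, x i - v i • w ∈ affineForms K z := by
    refine Fin.cases ?_ (apply_mem_affineForms z)
    simp [w, smul_smul, hv0]
  have forms_le : affineForms K x ≤ affineForms K z ⊔ Submodule.span K {w} := by
    refine sup_le ((one_le_affineForms z).trans le_sup_left) ?_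
    refine Submodule.span_le.2 (range_subset_iff.2 fun i => ?_)
    rw [← sub_add_cancel (x i) (v i • w)]
    exact add_mem (Submodule.mem_sup_left (sub_mem_forms i)) (Submodule.mem_sup_right
      (Submodule.smul_mem _ _ (Submodule.mem_span_singleton_self w)))
  have w_pow_mem : w ^ (k + 1) ∈ affineForms K z * affineForms K x ^ k := by
    have := aeval_sub_smul_pow_mem (one_le_affineForms z) (affineForms_le z_mem)
      (span_range_le_affineForms x w_mem) sub_mem_forms hk.le
    rwa [hf, zero_sub, neg_mem_iff,
      Submodule.smul_mem_iff _ (left_ne_zero_of_mul hv)] at this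
  exact ⟨z, z_mem, affineForms K x ^ k, (affineForms_fg x).pow k,
    pow_le_pow_mul_pow forms_le (span_range_le_affineForms x w_mem) (one_le_affineForms x)
      w_pow_mem⟩

theorem exists_isLinearNormalization {m : ℕ} (x : Fin m → A) :
    ∃ (e : ℕ) (y : Fin e → A), IsLinearNormalization K x y := by
  induction m with
  | zero => exact ⟨0, x, .refl algebraicIndependent_empty_type⟩
  | succ m ih =>
    by_cases hx : AlgebraicIndependent K x
    · exact ⟨m + 1, x, .refl hx⟩
    obtain ⟨z, hz, C, hC, hle⟩ := exists_affineForms_pow_le hx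
    obtain ⟨e, y, hy⟩ := ih z
    exact ⟨e, y, hy.of_pow_le hz hC hle⟩

end NoetherNormalizationField

section PointIdeal

variable {R σ : Type*} [CommRing R]

/-- The substitution `p(X) ↦ p(X + a)`. -/
def translate (a : σ → R) : MvPolynomial σ R ≃ₐ[R] MvPolynomial σ R :=
  AlgEquiv.ofAlgHom (aeval fun i => X i + C (a i)) (aeval fun i => X i - C (a i))
    (algHom_ext fun i => by simp) (algHom_ext fun i => by simp)

@[simp]
lemma translate_symm_X (a : σ → R) (i : σ) : (translate a).symm (X i) = X i - C (a i) :=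
  aeval_X ..

lemma coeff_zero_translate (a : σ → R) (p : MvPolynomial σ R) :
    coeff 0 (translate a p) = eval a p := by
  have h : (aeval (0 : σ → R)).comp (translate a).toAlgHom = aeval a :=
    algHom_ext fun i => by simp [translate]
  simpa [aeval_zero, aeval_eq_eval, constantCoeff_eq] using AlgHom.congr_fun h p

lemma totalDegree_translate_le (a : σ → R) (p : MvPolynomial σ R) :
    (translate a p).totalDegree ≤ p.totalDegree := by
  have forms_le : affineForms R (fun i => X i + C (a i) : σ → MvPolynomial σ R) ≤
      affineForms R X := by
    refine sup_le (one_le_affineForms _) (Submodule.span_le.2 (range_subset_iff.2 fun i => ?_))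
    exact add_mem (apply_mem_affineForms X i)
      (one_le_affineForms _ (Submodule.algebraMap_mem (a i)))
  rw [← mem_restrictTotalDegree, ← affineForms_X_pow]
  exact pow_le_pow_left' forms_le _ (aeval_mem_affineForms_pow _ p)

/-- The ideal of polynomials vanishing at the point `a`. -/
def pointIdeal (a : σ → R) : Ideal (MvPolynomial σ R) :=
  RingHom.ker (eval a)

lemma mem_pointIdeal {a : σ → R} {p : MvPolynomial σ R} : p ∈ pointIdeal a ↔ eval a p = 0 :=
  Iff.rfl

lemma comap_translate_idealOfVars (a : σ → R) :
    (idealOfVars σ R).comap (translate a).toRingEquiv = pointIdeal a := by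
  ext p
  rw [Ideal.mem_comap, ← pow_one (idealOfVars σ R), mem_pow_idealOfVars_iff', mem_pointIdeal,
    ← coeff_zero_translate]
  simp [Finsupp.degree_eq_zero_iff]

lemma pointIdeal_eq_map (a : σ → R) :
    pointIdeal a = (idealOfVars σ R).map (translate a).toRingEquiv.symm := by
  rw [← comap_translate_idealOfVars, Ideal.map_symm]

lemma pointIdeal_eq_span (a : σ → R) :
    pointIdeal a = Ideal.span (range fun i => X i - C (a i)) := by
  rw [pointIdeal_eq_map, idealOfVars, Ideal.map_span, ← range_comp]
  simp only [Function.comp_def, AlgEquiv.toRingEquiv_symm, AlgEquiv.coe_ringEquiv,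
    translate_symm_X]

lemma mem_pointIdeal_pow_iff {a : σ → R} {k : ℕ} {p : MvPolynomial σ R} :
    p ∈ pointIdeal a ^ k ↔ ∀ d : σ →₀ ℕ, d.degree < k → coeff d (translate a p) = 0 := by
  rw [pointIdeal_eq_map, ← Ideal.map_pow, Ideal.map_symm, Ideal.mem_comap,
    mem_pow_idealOfVars_iff']
  rfl

lemma eq_zero_of_mem_pointIdeal_pow {a : σ → R} {k : ℕ} {p : MvPolynomial σ R}
    (hp : p ∈ pointIdeal a ^ k) (hk : p.totalDegree < k) : p = 0 := by
  rw [← map_eq_zero_iff _ (translate a).injective]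
  ext d
  by_contra hd
  have := degree_le_totalDegree (mem_support_iff.2 hd)
  exact hd (mem_pointIdeal_pow_iff.1 hp d
    ((this.trans (totalDegree_translate_le a p)).trans_lt hk))

lemma exists_linearMap_ker_le_pointIdeal_pow {e : ℕ} (a : Fin e → R) (m : ℕ) :
    ∃ T : MvPolynomial (Fin e) R →ₗ[R] ((Fin e → Fin (m + 1)) → R),
      ∀ p, T p = 0 → p ∈ pointIdeal a ^ (m + 1) := by
  refine ⟨LinearMap.pi fun d => (lcoeff R (Finsupp.equivFunOnFinite.symm fun i => (d i : ℕ))) ∘ₗ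
    (translate a).toLinearMap, fun p hp => mem_pointIdeal_pow_iff.2 fun d hd => ?_⟩
  have := congrFun hp fun i => ⟨d i, (Finsupp.le_degree i d).trans_lt hd⟩
  have coe_eq : Finsupp.equivFunOnFinite.symm (fun i => d i) = d := Finsupp.ext fun _ => rfl
  simpa [coe_eq] using this

lemma height_pointIdeal (a : σ → R) : (pointIdeal a).height = (idealOfVars σ R).height := by
  rw [← comap_translate_idealOfVars, RingEquiv.height_comap]

end PointIdeal

section PointIdealField

variable {K σ : Type*} [Field K]

instance (a : σ → K) : (pointIdeal a).IsMaximal :=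
  RingHom.ker_isMaximal_of_surjective _ fun c => ⟨C c, by simp⟩

lemma mem_pointIdeal_pow_of_mul_mem {a : σ → K} {k : ℕ} {p q : MvPolynomial σ K}
    (hq : eval a q ≠ 0) (h : q * p ∈ pointIdeal a ^ k) : p ∈ pointIdeal a ^ k := by
  rcases eq_or_ne k 0 with rfl | hk
  · simp
  have primary : (pointIdeal a ^ k).IsPrimary := Ideal.isPrimary_of_isMaximal_radical <| by
    rw [Ideal.radical_pow _ hk, (inferInstance : (pointIdeal a).IsMaximal).isPrime.radical]
    infer_instance
  refine ((Ideal.isPrimary_iff.1 primary).2 (mul_comm q p ▸ h)).resolve_right fun hq' => hq ?_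
  rwa [Ideal.radical_pow _ hk, (inferInstance : (pointIdeal a).IsMaximal).isPrime.radical] at hq'

variable [IsAlgClosed K] [Finite σ]

lemma exists_eq_pointIdeal (M : Ideal (MvPolynomial σ K)) [M.IsMaximal] :
    ∃ a, M = pointIdeal a := by
  obtain ⟨a, rfl⟩ := MvPolynomial.isMaximal_iff_eq_vanishingIdeal_singleton.1 ‹M.IsMaximal›
  refine ⟨a, Ideal.ext fun p => ?_⟩
  rw [mem_vanishingIdeal_singleton_iff, mem_pointIdeal, aeval_eq_eval]

lemma exists_le_pointIdeal_of_notMem {Q : Ideal (MvPolynomial σ K)} [Q.IsPrime]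
    {g : MvPolynomial σ K} (hg : g ∉ Q) : ∃ a, Q ≤ pointIdeal a ∧ eval a g ≠ 0 := by
  by_contra! hvanish
  refine hg ?_
  rw [← MvPolynomial.IsPrime.vanishingIdeal_zeroLocus (K := K) Q,
    MvPolynomial.mem_vanishingIdeal_iff]
  intro a ha
  exact hvanish a ha

end PointIdealField

section Denominators

variable {R B M : Type*} [CommRing R] [CommRing B] [IsDomain B] [Algebra R B] [AddCommGroup M]
  [Module R M] [Module B M] [IsScalarTower R B M]

lemma exists_forall_smul_mem {S : Submodule R M} (hS : S.FG) {N : Submodule B M}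
    (h : ∀ x ∈ S, ∃ b : B, b ≠ 0 ∧ b • x ∈ N) : ∃ b : B, b ≠ 0 ∧ ∀ x ∈ S, b • x ∈ N := by
  induction S, hS using Submodule.fg_induction with
  | singleton x =>
    obtain ⟨b, hb, hbx⟩ := h x (Submodule.mem_span_singleton_self x)
    refine ⟨b, hb, fun y hy => ?_⟩
    obtain ⟨r, rfl⟩ := Submodule.mem_span_singleton.1 hy
    rw [← algebraMap_smul B r x, smul_comm]
    exact N.smul_mem _ hbx
  | sup S₁ S₂ _ _ ih₁ ih₂ =>
    obtain ⟨b₁, hb₁, h₁⟩ := ih₁ fun x hx => h x (Submodule.mem_sup_left hx)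
    obtain ⟨b₂, hb₂, h₂⟩ := ih₂ fun x hx => h x (Submodule.mem_sup_right hx)
    refine ⟨b₁ * b₂, mul_ne_zero hb₁ hb₂, fun x hx => ?_⟩
    obtain ⟨x₁, hx₁, x₂, hx₂, rfl⟩ := Submodule.mem_sup.1 hx
    rw [smul_add, mul_smul, mul_comm, mul_smul, smul_comm b₂ b₁]
    exact N.add_mem (smul_comm b₂ b₁ x₁ ▸ N.smul_mem b₂ (h₁ x₁ hx₁)) (N.smul_mem b₁ (h₂ x₂ hx₂))

/-- Here `Φ s` is the vector of coordinates of `b • s` in the linearly independent family `u`. -/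
lemma exists_linearIndependent_linearMap [IsNoetherian B M] {S : Submodule R M} (hS : S.FG) :
    ∃ (r : ℕ) (u : Fin r → M), (∀ i, u i ∈ S) ∧ LinearIndependent B u ∧
      ∃ b : B, b ≠ 0 ∧ ∃ Φ : S →ₗ[R] (Fin r → B), ∀ s, ∑ i, Φ s i • u i = b • (s : M) := by
  obtain ⟨t, ht, hmax⟩ := exists_maximal_linearIndepOn B (Subtype.val : S → M)
  have : Finite t := ht.finite_of_isNoetherian
  let u : Fin (Nat.card t) → M := fun i => ((Finite.equivFin t).symm i : S)
  have hu : LinearIndependent B u := ht.comp _ (Finite.equivFin t).symm.injective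
  have range_u : range u = Subtype.val '' t := by
    rw [image_eq_range]
    exact (Finite.equivFin t).symm.surjective.range_comp fun s : t => ((s : S) : M)
  obtain ⟨b, hb, hspan⟩ := exists_forall_smul_mem hS (N := Submodule.span B (range u))
    fun x hx => by
      by_cases hxt : (⟨x, hx⟩ : S) ∈ t
      · exact ⟨1, one_ne_zero, Submodule.smul_mem _ _
          (Submodule.subset_span (range_u ▸ mem_image_of_mem _ hxt))⟩
      · exact range_u ▸ hmax _ hxt
  let scaled : S →ₗ[R] Submodule.span B (range u) :=
    { toFun := fun s => ⟨b • (s : M), hspan s s.2⟩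
      map_add' := fun s s' => Subtype.ext (smul_add b (s : M) s')
      map_smul' := fun c s => Subtype.ext (smul_comm b c (s : M)) }
  refine ⟨Nat.card t, u, fun i => Subtype.prop _, hu, b, hb,
    (Finsupp.linearEquivFunOnFinite B B (Fin (Nat.card t))).toLinearMap.restrictScalars R ∘ₗ
      hu.repr.restrictScalars R ∘ₗ scaled, fun s => ?_⟩
  have := hu.linearCombination_repr (scaled s)
  rwa [Finsupp.linearCombination_apply, Finsupp.sum_fintype _ _ (by simp)] at this

lemma exists_injective_linearMap (B M : Type*) [CommRing B] [IsDomain B] [AddCommGroup M]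
    [Module B M] [IsNoetherian B M] [Module.IsTorsionFree B M] :
    ∃ (r : ℕ) (Φ : M →ₗ[B] (Fin r → B)), Function.Injective Φ := by
  obtain ⟨r, u, -, -, b, hb, Φ, hΦ⟩ := exists_linearIndependent_linearMap (R := B) (B := B)
    (Module.Finite.fg_top (R := B) (M := M))
  refine ⟨r, Φ ∘ₗ Submodule.topEquiv.symm.toLinearMap, (injective_iff_map_eq_zero _).2
    fun s hs => ?_⟩
  have smul_eq_zero : b • s = 0 := by
    refine (hΦ (Submodule.topEquiv.symm s)).symm.trans ?_
    exact Finset.sum_eq_zero fun i _ => (congrArg (· • u i) (congrFun hs i)).trans (zero_smul B _)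
  exact (smul_eq_zero_iff_right hb).1 smul_eq_zero

lemma map_mem_of_mem_map_algebraMap {B A : Type*} [CommRing B] [CommRing A] [Algebra B A]
    (φ : A →ₗ[B] B) {I : Ideal B} {a : A} (ha : a ∈ I.map (algebraMap B A)) : φ a ∈ I := by
  rw [← Submodule.restrictScalars_mem B, ← Ideal.smul_top_eq_map] at ha
  refine (Submodule.map_smul'' I ⊤ φ).trans_le ?_ (Submodule.mem_map_of_mem ha)
  exact Submodule.smul_le.2 fun r hr _ _ => I.mul_mem_right _ hr

end Denominators

section HilbertBounds

variable {K A σ : Type*} [Field K] [CommRing A] [Algebra K A] {e : ℕ}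
  [Algebra (MvPolynomial (Fin e) K) A] [IsScalarTower K (MvPolynomial (Fin e) K) A] {x : σ → A}

lemma exists_le_restrictTotalDegree {σ : Type*} {N : Submodule K (MvPolynomial σ K)}
    (hN : N.FG) : ∃ s, N ≤ restrictTotalDegree σ K s := by
  induction N, hN using Submodule.fg_induction with
  | singleton p =>
    exact ⟨p.totalDegree, (Submodule.span_singleton_le_iff_mem _ _).2
      ((mem_restrictTotalDegree _ _ _).2 le_rfl)⟩
  | sup N₁ N₂ _ _ ih₁ ih₂ =>
    obtain ⟨s₁, h₁⟩ := ih₁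
    obtain ⟨s₂, h₂⟩ := ih₂
    have mono : Monotone (restrictTotalDegree σ K) := fun s s' h p hp =>
      (mem_restrictTotalDegree _ _ _).2 (((mem_restrictTotalDegree _ _ _).1 hp).trans h)
    exact ⟨max s₁ s₂, sup_le (h₁.trans (mono (le_max_left _ _)))
      (h₂.trans (mono (le_max_right _ _)))⟩

lemma affineForms_algebraMap_X_pow (M : ℕ) :
    affineForms K (fun i => algebraMap (MvPolynomial (Fin e) K) A (X i)) ^ M =
      (restrictTotalDegree (Fin e) K M).map
        (IsScalarTower.toAlgHom K (MvPolynomial (Fin e) K) A).toLinearMap := by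
  simp only [map_restrictTotalDegree, Function.comp_def, IsScalarTower.coe_toAlgHom']

lemma algebraMap_mem_affineForms_pow
    (hX : ∀ i, algebraMap (MvPolynomial (Fin e) K) A (X i) ∈ affineForms K x) {M : ℕ}
    {p : MvPolynomial (Fin e) K} (hp : p.totalDegree ≤ M) :
    algebraMap (MvPolynomial (Fin e) K) A p ∈ affineForms K x ^ M := by
  have forms_le : affineForms K (fun i => algebraMap (MvPolynomial (Fin e) K) A (X i)) ≤
      affineForms K x :=
    sup_le (one_le_affineForms x) (Submodule.span_le.2 (range_subset_iff.2 hX))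
  refine pow_le_pow_left' forms_le M ?_
  rw [affineForms_algebraMap_X_pow]
  exact Submodule.mem_map_of_mem ((mem_restrictTotalDegree _ _ _).2 hp)

lemma card_mul_le_finrank_affineForms_pow [Finite σ]
    (hX : ∀ i, algebraMap (MvPolynomial (Fin e) K) A (X i) ∈ affineForms K x) {m r : ℕ}
    {u : Fin r → A} (hu : ∀ i, u i ∈ affineForms K x ^ m)
    (hli : LinearIndependent (MvPolynomial (Fin e) K) u) (t : ℕ) :
    r * (t + 1) ^ e ≤ Module.finrank K ↥(affineForms K x ^ (m + e * t)) := by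
  let exponent (d : Fin e → Fin (t + 1)) : Fin e →₀ ℕ :=
    Finsupp.equivFunOnFinite.symm fun i => (d i : ℕ)
  have exponent_injective : Function.Injective exponent :=
    Finsupp.equivFunOnFinite.symm.injective.comp
      (Function.Injective.comp_left Fin.val_injective)
  have degree_le (d) : (exponent d).degree ≤ e * t := by
    rw [Finsupp.degree_eq_sum]
    exact (Finset.sum_le_card_nsmul _ _ t fun i _ => Fin.is_le (d i)).trans_eq (by simp)
  have smul_mem (q : (Fin e → Fin (t + 1)) × Fin r) :
      monomial (exponent q.1) (1 : K) • u q.2 ∈ affineForms K x ^ (m + e * t) := by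
    rw [Algebra.smul_def, add_comm, pow_add]
    exact Submodule.mul_mem_mul (algebraMap_mem_affineForms_pow hX
      (((totalDegree_monomial_le _ _).trans_eq (Finsupp.degree_apply _).symm).trans
        (degree_le q.1))) (hu q.2)
  have monomials_li : LinearIndependent K fun d => monomial (exponent d) (1 : K) := by
    simpa [Function.comp_def] using
      (basisMonomials (Fin e) K).linearIndependent.comp _ exponent_injective
  have products_li := linearIndependent_smul monomials_li hli
  have hv : LinearIndependent K fun q => (⟨_, smul_mem q⟩ : ↥(affineForms K x ^ (m + e * t))) :=
    LinearIndependent.of_comp (Submodule.subtype _) products_li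
  calc r * (t + 1) ^ e = Fintype.card ((Fin e → Fin (t + 1)) × Fin r) := by
        simp [mul_comm]
    _ ≤ _ := hv.fintype_card_le_finrank

variable (hx : Function.Surjective (aeval x : MvPolynomial σ K →ₐ[K] A))

include hx in
lemma exists_mem_affineForms_pow (a : A) : ∃ M, a ∈ affineForms K x ^ M := by
  obtain ⟨p, rfl⟩ := hx a
  exact ⟨_, aeval_mem_affineForms_pow x p⟩

namespace IsLinearNormalization

variable (h : IsLinearNormalization K x fun i => algebraMap (MvPolynomial (Fin e) K) A (X i))

include h

lemma algebraMap_injective : Function.Injective (algebraMap (MvPolynomial (Fin e) K) A) := by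
  have : aeval (fun i => algebraMap (MvPolynomial (Fin e) K) A (X i)) =
      IsScalarTower.toAlgHom K (MvPolynomial (Fin e) K) A :=
    algHom_ext fun i => by simp
  simpa [AlgebraicIndependent, this] using h.algebraicIndependent

include hx in
lemma module_finite : Module.Finite (MvPolynomial (Fin e) K) A := by
  obtain ⟨C, ⟨G, rfl⟩, hC⟩ := h.exists_fg
  refine ⟨⟨G, eq_top_iff.2 fun a _ => ?_⟩⟩
  obtain ⟨M, ha⟩ := exists_mem_affineForms_pow hx a
  have mul_le : Submodule.span K (G : Set A) *
      affineForms K (fun i => algebraMap (MvPolynomial (Fin e) K) A (X i)) ^ M ≤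
      (Submodule.span (MvPolynomial (Fin e) K) (G : Set A)).restrictScalars K := by
    rw [affineForms_algebraMap_X_pow, Submodule.mul_le]
    rintro c hc _ ⟨q, -, rfl⟩
    rw [mul_comm]
    exact Algebra.smul_def q c ▸
      Submodule.smul_mem _ q (Submodule.span_le_restrictScalars K _ _ hc)
  exact mul_le (hC M ha)

lemma exists_totalDegree_le {ι : Type*} [Finite ι]
    (Φ : A →ₗ[MvPolynomial (Fin e) K] (ι → MvPolynomial (Fin e) K)) :
    ∃ s, ∀ M, ∀ f ∈ affineForms K x ^ M, ∀ i, (Φ f i).totalDegree ≤ M + s := by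
  obtain ⟨C, hC, hle⟩ := h.exists_fg
  have degree_bound (i : ι) : ∃ s, ∀ c ∈ C, (Φ c i).totalDegree ≤ s := by
    obtain ⟨s, hs⟩ := exists_le_restrictTotalDegree
      (hC.map ((LinearMap.proj i ∘ₗ Φ).restrictScalars K))
    exact ⟨s, fun c hc => (mem_restrictTotalDegree _ _ _).1 (hs ⟨c, hc, rfl⟩)⟩
  choose s hs using degree_bound
  obtain ⟨s', hs'⟩ := (finite_range s).bddAbove
  refine ⟨s', fun M f hf i => ?_⟩
  have mul_le : C * affineForms K (fun i => algebraMap (MvPolynomial (Fin e) K) A (X i)) ^ M ≤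
      (restrictTotalDegree (Fin e) K (M + s')).comap
        ((LinearMap.proj i ∘ₗ Φ).restrictScalars K) := by
    rw [affineForms_algebraMap_X_pow, Submodule.mul_le]
    rintro c hc _ ⟨q, hq, rfl⟩
    have map_mul : Φ (c * algebraMap _ A q) i = q * Φ c i := by
      rw [mul_comm, ← Algebra.smul_def, map_smul, Pi.smul_apply, smul_eq_mul]
    refine (mem_restrictTotalDegree _ _ _).2 ((congrArg _ map_mul).trans_le ?_)
    exact (totalDegree_mul _ _).trans (add_le_add ((mem_restrictTotalDegree _ _ _).1 hq)
      ((hs i c hc).trans (hs' ⟨i, rfl⟩)))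
  exact (mem_restrictTotalDegree _ _ _).1 (mul_le (hle M hf))

section Domain

variable [IsDomain A]

lemma isTorsionFree : Module.IsTorsionFree (MvPolynomial (Fin e) K) A :=
  Module.isTorsionFree_iff_algebraMap_injective.2 h.algebraMap_injective

include hx in
lemma eq_zero_of_smul_mem_map_pointIdeal_pow {a : Fin e → K} {Q : MvPolynomial (Fin e) K}
    (hQ : eval a Q ≠ 0) {m : ℕ} {s : A} (hs : s ∈ affineForms K x ^ m)
    (hmem : Q • s ∈ (pointIdeal a ^ (m + 1)).map (algebraMap (MvPolynomial (Fin e) K) A)) :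
    s = 0 := by
  have := h.module_finite hx
  have := h.isTorsionFree
  obtain ⟨r, Φ, hΦ⟩ := exists_injective_linearMap (MvPolynomial (Fin e) K) A
  obtain ⟨s₀, hs₀⟩ := h.exists_totalDegree_le Φ
  -- Raising `s` to the power `s₀ + 1` makes the defect `s₀` in the degree bound harmless.
  refine eq_zero_of_pow_eq_zero (n := s₀ + 1) (hΦ ?_)
  have pow_mem : s ^ (s₀ + 1) ∈ affineForms K x ^ (m * (s₀ + 1)) :=
    pow_mul (affineForms K x) m (s₀ + 1) ▸ Submodule.pow_mem_pow _ hs _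
  rw [map_zero]
  funext i
  refine eq_zero_of_mem_pointIdeal_pow (a := a) (k := (m + 1) * (s₀ + 1))
    (mem_pointIdeal_pow_of_mul_mem (q := Q ^ (s₀ + 1)) (by simpa using hQ) ?_)
    ((hs₀ _ _ pow_mem i).trans_lt (by lia))
  have smul_pow_mem : Q ^ (s₀ + 1) • s ^ (s₀ + 1) ∈
      (pointIdeal a ^ ((m + 1) * (s₀ + 1))).map (algebraMap (MvPolynomial (Fin e) K) A) := by
    rw [← smul_pow, pow_mul, Ideal.map_pow]
    exact Ideal.pow_mem_pow hmem _
  simpa using map_mem_of_mem_map_algebraMap (LinearMap.proj i ∘ₗ Φ) smul_pow_mem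

include hx in
lemma exists_finrank_affineForms_pow_le [Infinite K] [Finite σ] (m : ℕ) :
    ∃ (r : ℕ) (u : Fin r → A), (∀ i, u i ∈ affineForms K x ^ m) ∧
      LinearIndependent (MvPolynomial (Fin e) K) u ∧
        Module.finrank K ↥(affineForms K x ^ m) ≤ r * (m + 1) ^ e := by
  have := h.module_finite hx
  obtain ⟨r, u, hu, hli, Q, hQ, Φ, hΦ⟩ := exists_linearIndependent_linearMap
    (B := MvPolynomial (Fin e) K) ((affineForms_fg (K := K) x).pow m)
  refine ⟨r, u, hu, hli, ?_⟩
  obtain ⟨a, ha⟩ := exists_eval_ne_zero hQ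
  obtain ⟨T, hT⟩ := exists_linearMap_ker_le_pointIdeal_pow a m
  have injective : Function.Injective (T.compLeft (Fin r) ∘ₗ Φ) :=
    (injective_iff_map_eq_zero _).2 fun s hs => Subtype.ext <|
      h.eq_zero_of_smul_mem_map_pointIdeal_pow hx ha s.2 <| by
        rw [← hΦ]
        refine Ideal.sum_mem _ fun i _ => ?_
        rw [Algebra.smul_def]
        exact Ideal.mul_mem_right _ _ (Ideal.mem_map_of_mem _ (hT _ (congrFun hs i)))
  refine (LinearMap.finrank_le_finrank_of_injective injective).trans_eq ?_
  simp [Module.finrank_pi_fintype]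

include hx in
theorem finrank_affineForms_pow_le [Infinite K] [Finite σ] (m : ℕ) :
    Module.finrank K ↥(affineForms K x ^ m) ≤
      Module.finrank (MvPolynomial (Fin e) K) A * (m + 1) ^ e := by
  have := h.module_finite hx
  obtain ⟨r, u, -, hli, hle⟩ := h.exists_finrank_affineForms_pow_le hx m
  exact hle.trans (Nat.mul_le_mul_right _ (by simpa using hli.fintype_card_le_finrank))

include hx in
theorem finrank_affineForms_pow_mul_le [Infinite K] [Finite σ] (m t : ℕ) :
    Module.finrank K ↥(affineForms K x ^ m) * (t + 1) ^ e ≤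
      Module.finrank K ↥(affineForms K x ^ (m + e * t)) * (m + 1) ^ e := by
  obtain ⟨r, u, hu, hli, hle⟩ := h.exists_finrank_affineForms_pow_le hx m
  calc _ ≤ r * (m + 1) ^ e * (t + 1) ^ e := Nat.mul_le_mul_right _ hle
    _ = r * (t + 1) ^ e * (m + 1) ^ e := by ring
    _ ≤ _ := Nat.mul_le_mul_right _
      (card_mul_le_finrank_affineForms_pow h.mem_affineForms hu hli t)

end Domain

end IsLinearNormalization

end HilbertBounds

section KrullDimension

lemma ringKrullDim_le_of_hasGoingUp (R S : Type*) [CommRing R] [CommRing S] [IsDomain S]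
    [Algebra R S] [FaithfulSMul R S] [Algebra.HasGoingUp R S] :
    ringKrullDim R ≤ ringKrullDim S := by
  refine iSup_le fun l => ?_
  have : (⊥ : Ideal S).LiesOver (⊥ : Ideal R) := Ideal.bot_liesOver_bot R S
  obtain ⟨P, -, _, _⟩ :=
    Ideal.exists_ideal_ge_liesOver_of_le (⊥ : Ideal S) (bot_le : ⊥ ≤ l.head.asIdeal)
  obtain ⟨L, hL, -⟩ := Ideal.exists_ltSeries_of_hasGoingUp l P
  exact hL ▸ Order.LTSeries.length_le_krullDim L

lemma ringKrullDim_quotient_add_one_le_of_lt {R : Type*} [CommRing R] {P Q : Ideal R} [P.IsPrime]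
    (h : P < Q) : ringKrullDim (R ⧸ Q) + 1 ≤ ringKrullDim (R ⧸ P) := by
  obtain ⟨f, hfQ, hfP⟩ := SetLike.exists_of_lt h
  refine le_trans ?_ (ringKrullDim_quotient_succ_le_of_nonZeroDivisor
    (r := Ideal.Quotient.mk P f)
    (mem_nonZeroDivisors_of_ne_zero (by rwa [Ne, Ideal.Quotient.eq_zero_iff_mem])))
  gcongr
  refine ringKrullDim_le_of_surjective (Ideal.Quotient.lift _ (Ideal.Quotient.factor h.le) ?_)
    (Ideal.Quotient.lift_surjective_of_surjective _ _ (Ideal.Quotient.factor_surjective h.le))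
  simp only [← RingHom.mem_ker, ← SetLike.le_def, Ideal.span_singleton_le_iff_mem]
  simpa [RingHom.mem_ker, Ideal.Quotient.eq_zero_iff_mem] using hfQ

variable {K : Type*} [Field K]

lemma exists_algebra_isLinearNormalization {A : Type*} [Infinite K] [CommRing A] [Nontrivial A]
    [Algebra K A] {m : ℕ} (x : Fin m → A) :
    ∃ (e : ℕ) (_ : Algebra (MvPolynomial (Fin e) K) A)
      (_ : IsScalarTower K (MvPolynomial (Fin e) K) A),
      IsLinearNormalization K x fun i => algebraMap (MvPolynomial (Fin e) K) A (X i) := by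
  obtain ⟨e, y, h⟩ := exists_isLinearNormalization (K := K) x
  let _ := (aeval y : MvPolynomial (Fin e) K →ₐ[K] A).toAlgebra
  have algebraMap_X (i : Fin e) : algebraMap (MvPolynomial (Fin e) K) A (X i) = y i := aeval_X y i
  exact ⟨e, inferInstance, inferInstance, by simpa only [algebraMap_X]⟩

variable [IsAlgClosed K]

lemma height_pointIdeal_fin {e : ℕ} (a : Fin e → K) : (pointIdeal a).height = e := by
  have dim_eq : ringKrullDim (MvPolynomial (Fin e) K) = e := by
    simp [MvPolynomial.ringKrullDim_of_isNoetherianRing]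
  have : FiniteRingKrullDim (MvPolynomial (Fin e) K) :=
    finiteRingKrullDim_iff_ne_bot_and_top.2
      (dim_eq ▸ ⟨WithBot.natCast_ne_bot e, WithBot.coe_inj.not.2 (ENat.natCast_ne_top e)⟩)
  obtain ⟨M, _, hM⟩ := Ideal.exists_isMaximal_height (R := MvPolynomial (Fin e) K)
  obtain ⟨b, rfl⟩ := exists_eq_pointIdeal M
  rw [height_pointIdeal, ← height_pointIdeal b]
  exact_mod_cast hM.trans dim_eq

namespace IsLinearNormalization

variable {A σ : Type*} [CommRing A] [IsDomain A] [Algebra K A] {e : ℕ}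
  [Algebra (MvPolynomial (Fin e) K) A] [IsScalarTower K (MvPolynomial (Fin e) K) A] {x : σ → A}
  (h : IsLinearNormalization K x fun i => algebraMap (MvPolynomial (Fin e) K) A (X i))
  (hx : Function.Surjective (aeval x : MvPolynomial σ K →ₐ[K] A))

include h hx

lemma height_eq (M : Ideal A) [M.IsMaximal] : M.height = e := by
  have := h.module_finite hx
  have := h.isTorsionFree
  have : IsNoetherianRing A := IsNoetherianRing.of_finite (MvPolynomial (Fin e) K) A
  have : (M.under (MvPolynomial (Fin e) K)).IsMaximal :=
    Ideal.isMaximal_comap_of_isIntegral_of_isMaximal M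
  obtain ⟨a, ha⟩ := exists_eq_pointIdeal (M.under (MvPolynomial (Fin e) K))
  apply le_antisymm
  · have mem_minimalPrimes :=
      Ideal.IsIntegral.mem_minimalPrimes_map_under (R := MvPolynomial (Fin e) K) M
    rw [ha, pointIdeal_eq_span, Ideal.map_span, ← range_comp] at mem_minimalPrimes
    refine (Ideal.height_le_card_of_mem_minimalPrimes_span (finite_range _)
      mem_minimalPrimes).trans ?_
    rw [← image_univ]
    exact_mod_cast (ncard_image_le finite_univ).trans_eq (by simp [ncard_univ])
  · rw [Ideal.height_eq_height_add_of_liesOver_of_hasGoingDown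
      (M.under (MvPolynomial (Fin e) K)) M, ha, height_pointIdeal_fin]
    exact le_self_add

lemma ringKrullDim_eq : ringKrullDim A = e := by
  apply le_antisymm
  · refine (ringKrullDim_le_iff_isMaximal_height_le _).2 fun M _ => ?_
    rw [h.height_eq hx M, WithBot.coe_natCast]
  · obtain ⟨M, _⟩ := Ideal.exists_maximal A
    rw [← WithBot.coe_natCast, ← h.height_eq hx M]
    exact Ideal.height_le_ringKrullDim_of_isPrime

lemma ringKrullDim_le_ringKrullDim_quotient_add_one {Q : Ideal A} [Q.IsPrime]
    (hQ : Q.height ≤ 1) : ringKrullDim A ≤ ringKrullDim (A ⧸ Q) + 1 := by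
  have := h.module_finite hx
  have := h.isTorsionFree
  have : IsNoetherianRing A := IsNoetherianRing.of_finite (MvPolynomial (Fin e) K) A
  set p := Q.under (MvPolynomial (Fin e) K)
  have height_le : p.height ≤ 1 :=
    (Ideal.height_eq_height_add_of_liesOver_of_hasGoingDown p Q ▸ le_self_add).trans hQ
  obtain ⟨f, hf⟩ : p.IsPrincipal := by
    rcases height_le.lt_or_eq with hlt | heq
    · rw [Order.lt_one_iff, Ideal.height_eq_zero_iff_eq_bot] at hlt
      exact hlt ▸ inferInstance
    · exact UniqueFactorizationMonoid.isPrincipal_of_height_eq_one heq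
  obtain ⟨M, hM, hpM⟩ := p.exists_le_maximal Ideal.IsPrime.ne_top'
  obtain ⟨a, rfl⟩ := exists_eq_pointIdeal M
  calc ringKrullDim A = (pointIdeal a).height := by
        rw [h.ringKrullDim_eq hx, height_pointIdeal_fin, WithBot.coe_natCast]
    _ ≤ ringKrullDim (MvPolynomial (Fin e) K ⧸ p) + 1 := by
        rw [hf]
        exact Ideal.height_le_ringKrullDim_quotient_add_one
          (hpM (hf ▸ Ideal.mem_span_singleton_self f))
    _ ≤ ringKrullDim (A ⧸ Q) + 1 := by
        gcongr
        exact ringKrullDim_le_of_hasGoingUp _ _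

end IsLinearNormalization

theorem ringKrullDim_quotient_le_add_one (K : Type*) {A : Type*} [Field K] [IsAlgClosed K]
    [CommRing A] [Algebra K A] [Algebra.FiniteType K A] {P Q : Ideal A} [P.IsPrime] {f : A}
    (hQ : Q ∈ (P ⊔ Ideal.span {f}).minimalPrimes) :
    ringKrullDim (A ⧸ P) ≤ ringKrullDim (A ⧸ Q) + 1 := by
  have hPQ : P ≤ Q := le_sup_left.trans hQ.1.2
  have := hQ.1.1
  have := Algebra.FiniteType.isNoetherianRing K A
  have : (Q.map (Ideal.Quotient.mk P)).IsPrime := Ideal.isPrime_map_quotientMk_of_isPrime hPQ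
  obtain ⟨m, φ, hφ⟩ := Algebra.FiniteType.iff_quotient_mvPolynomial''.1
    (inferInstance : Algebra.FiniteType K (A ⧸ P))
  obtain ⟨e, _, _, h⟩ := exists_algebra_isLinearNormalization (K := K) (φ ∘ X)
  rw [← ringKrullDim_eq_of_ringEquiv (DoubleQuot.quotQuotEquivQuotOfLE hPQ)]
  exact h.ringKrullDim_le_ringKrullDim_quotient_add_one
    (by rwa [← aeval_unique φ]) (Ideal.map_height_le_one_of_mem_minimalPrimes hQ)

end KrullDimension

section Dictionary

variable {n} {V W : Set (Fin n → ℂ)}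

lemma zeroLocus_anti {I J : Set (MvPolynomial (Fin n) ℂ)} (h : I ⊆ J) :
    zeroLocus n J ⊆ zeroLocus n I :=
  fun _ hx f hf => hx f (h hf)

lemma vanishingIdeal_anti (h : V ⊆ W) : vanishingIdeal n W ≤ vanishingIdeal n V :=
  fun _ hf x hx => hf x (h hx)

lemma subset_zeroLocus_iff {I : Set (MvPolynomial (Fin n) ℂ)} :
    V ⊆ zeroLocus n I ↔ I ⊆ vanishingIdeal n V :=
  ⟨fun h f hf _ hx => h hx f hf, fun h _ hx _ hf => h hf _ hx⟩

lemma isAlgebraicSet_zeroLocus (I : Set (MvPolynomial (Fin n) ℂ)) :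
    IsAlgebraicSet n (zeroLocus n I) :=
  ⟨I, rfl⟩

lemma zeroLocus_vanishingIdeal (h : IsAlgebraicSet n V) :
    zeroLocus n (vanishingIdeal n V : Set (MvPolynomial (Fin n) ℂ)) = V := by
  obtain ⟨I, rfl⟩ := h
  exact (zeroLocus_anti (subset_zeroLocus_iff.1 subset_rfl)).antisymm
    (subset_zeroLocus_iff.2 subset_rfl)

lemma vanishingIdeal_zeroLocus (P : Ideal (MvPolynomial (Fin n) ℂ)) [P.IsPrime] :
    vanishingIdeal n (zeroLocus n (P : Set (MvPolynomial (Fin n) ℂ))) = P := by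
  refine le_antisymm (fun g hg => ?_) (subset_zeroLocus_iff.1 subset_rfl)
  by_contra hgP
  obtain ⟨a, ha, hag⟩ := exists_le_pointIdeal_of_notMem hgP
  exact hag (hg a ha)

lemma vanishingIdeal_le_iff (hW : IsAlgebraicSet n W) :
    vanishingIdeal n W ≤ vanishingIdeal n V ↔ V ⊆ W := by
  rw [← SetLike.coe_subset_coe, ← subset_zeroLocus_iff, zeroLocus_vanishingIdeal hW]

lemma IsIrredVariety.isPrime_vanishingIdeal (hV : IsIrredVariety n V) :
    (vanishingIdeal n V).IsPrime := by
  obtain ⟨-, ⟨p, hp⟩, hirr⟩ := hV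
  refine ⟨(Ideal.ne_top_iff_one _).2 fun h => by simpa using h p hp, fun {f g} hfg => ?_⟩
  have covered : V ⊆ zeroLocus n {f} ∪ zeroLocus n {g} := fun x hx => by
    simpa [zeroLocus] using hfg x hx
  simpa [subset_zeroLocus_iff] using
    hirr _ _ (isAlgebraicSet_zeroLocus _) (isAlgebraicSet_zeroLocus _) covered

lemma isIrredVariety_zeroLocus (P : Ideal (MvPolynomial (Fin n) ℂ)) [hP : P.IsPrime] :
    IsIrredVariety n (zeroLocus n (P : Set (MvPolynomial (Fin n) ℂ))) := by
  refine ⟨isAlgebraicSet_zeroLocus _, ?_, fun V₁ V₂ hV₁ hV₂ hcover => ?_⟩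
  · obtain ⟨a, ha, -⟩ := exists_le_pointIdeal_of_notMem ((Ideal.ne_top_iff_one P).1 hP.ne_top)
    exact ⟨a, ha⟩
  · rw [← vanishingIdeal_le_iff hV₁, ← vanishingIdeal_le_iff hV₂, vanishingIdeal_zeroLocus P,
      ← hP.mul_le, Ideal.mul_le]
    rintro f hf g hg
    rw [← vanishingIdeal_zeroLocus P]
    intro a ha
    rw [map_mul, mul_eq_zero]
    exact (hcover ha).imp (hf a) (hg a)

lemma hasChain_iff (hV : IsIrredVariety n V) (d : ℕ) :
    HasChain n V d ↔
      (d : WithBot ℕ∞) ≤ ringKrullDim (MvPolynomial (Fin n) ℂ ⧸ vanishingIdeal n V) := by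
  rw [ringKrullDim_quotient, Order.le_krullDim_iff]
  constructor
  · rintro ⟨W, hW, hlt, hlast⟩
    refine ⟨LTSeries.mk d (fun i => ⟨⟨vanishingIdeal n (W i.rev), (hW _).isPrime_vanishingIdeal⟩,
      ?_⟩) fun i j hij => ?_, rfl⟩
    · have mono : Monotone W := (show StrictMono W from hlt).monotone
      exact vanishingIdeal_anti ((mono (Fin.le_last _)).trans hlast)
    · have hlt := hlt _ _ (Fin.rev_lt_rev.2 hij)
      exact lt_of_le_not_ge (vanishingIdeal_anti hlt.1)
        fun h => hlt.2 ((vanishingIdeal_le_iff (hW _).1).1 h)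
  · rintro ⟨l, rfl⟩
    refine ⟨fun i => zeroLocus n (l i.rev).1.asIdeal, fun i => isIrredVariety_zeroLocus _,
      fun i j hij => ?_, ?_⟩
    · have hlt : (l j.rev).1.asIdeal < (l i.rev).1.asIdeal := l.strictMono (Fin.rev_lt_rev.2 hij)
      refine ⟨zeroLocus_anti hlt.le, fun h => hlt.not_ge ?_⟩
      simpa only [vanishingIdeal_zeroLocus] using vanishingIdeal_anti h
    · exact (zeroLocus_anti (l _).2).trans_eq (zeroLocus_vanishingIdeal hV.1)

lemma aeval_mk_X_surjective {K σ : Type*} [CommRing K] (I : Ideal (MvPolynomial σ K)) :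
    Function.Surjective
      (aeval fun i => Ideal.Quotient.mk I (X i) : MvPolynomial σ K →ₐ[K] MvPolynomial σ K ⧸ I) :=
  aeval_unique (Ideal.Quotient.mkₐ K I) ▸ Ideal.Quotient.mkₐ_surjective K I

lemma ringKrullDim_eq_dim (hV : IsIrredVariety n V) :
    ringKrullDim (MvPolynomial (Fin n) ℂ ⧸ vanishingIdeal n V) = dim n V := by
  have := hV.isPrime_vanishingIdeal
  obtain ⟨e, _, _, h⟩ := exists_algebra_isLinearNormalization (K := ℂ)
    fun i => Ideal.Quotient.mk (vanishingIdeal n V) (X i)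
  have dim_eq := h.ringKrullDim_eq (aeval_mk_X_surjective _)
  have chains : {d | HasChain n V d} = Iic e := by
    ext d
    simp [hasChain_iff hV, dim_eq]
  rw [dim_eq, dim, chains, csSup_Iic]

lemma exists_isLinearNormalization_vanishingIdeal (hV : IsIrredVariety n V) :
    ∃ (_ : Algebra (MvPolynomial (Fin (dim n V)) ℂ) (MvPolynomial (Fin n) ℂ ⧸ vanishingIdeal n V))
      (_ : IsScalarTower ℂ (MvPolynomial (Fin (dim n V)) ℂ)
        (MvPolynomial (Fin n) ℂ ⧸ vanishingIdeal n V)),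
      IsLinearNormalization ℂ (fun i => Ideal.Quotient.mk (vanishingIdeal n V) (X i))
        fun i => algebraMap (MvPolynomial (Fin (dim n V)) ℂ)
          (MvPolynomial (Fin n) ℂ ⧸ vanishingIdeal n V) (X i) := by
  have := hV.isPrime_vanishingIdeal
  obtain ⟨e, _, _, h⟩ := exists_algebra_isLinearNormalization (K := ℂ)
    fun i => Ideal.Quotient.mk (vanishingIdeal n V) (X i)
  obtain rfl : dim n V = e := by
    exact_mod_cast (ringKrullDim_eq_dim hV).symm.trans (h.ringKrullDim_eq (aeval_mk_X_surjective _))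
  exact ⟨inferInstance, inferInstance, h⟩

lemma dim_lt_dim (hV : IsIrredVariety n V) (hW : IsIrredVariety n W) (h : V ⊂ W) :
    dim n V < dim n W := by
  have := hW.isPrime_vanishingIdeal
  have := ringKrullDim_quotient_add_one_le_of_lt <| lt_of_le_not_ge (vanishingIdeal_anti h.1)
    (mt (vanishingIdeal_le_iff hV.1).1 h.2)
  rw [ringKrullDim_eq_dim hV, ringKrullDim_eq_dim hW] at this
  exact_mod_cast this

lemma dim_le_dim (hV : IsIrredVariety n V) (hW : IsIrredVariety n W) (h : V ⊆ W) :
    dim n V ≤ dim n W := by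
  rcases h.eq_or_ssubset with rfl | h
  · rfl
  · exact (dim_lt_dim hV hW h).le

lemma zeroLocus_bot :
    zeroLocus n ((⊥ : Ideal (MvPolynomial (Fin n) ℂ)) : Set (MvPolynomial (Fin n) ℂ)) = univ := by
  simp [zeroLocus]

lemma isIrredVariety_univ : IsIrredVariety n (univ : Set (Fin n → ℂ)) :=
  zeroLocus_bot (n := n) ▸ isIrredVariety_zeroLocus ⊥

lemma dim_univ : dim n (univ : Set (Fin n → ℂ)) = n := by
  have vanishing : vanishingIdeal n univ = ⊥ := by rw [← zeroLocus_bot, vanishingIdeal_zeroLocus]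
  have := ringKrullDim_eq_dim (isIrredVariety_univ (n := n))
  rw [vanishing, ringKrullDim_eq_of_ringEquiv (RingEquiv.quotientBot _),
    MvPolynomial.ringKrullDim_of_isNoetherianRing] at this
  simpa using this.symm

lemma exists_component_inter (hV : IsIrredVariety n V) (hW : IsIrredVariety n W) (hVW : V ⊆ W)
    {f : MvPolynomial (Fin n) ℂ} (hf : f ∈ vanishingIdeal n V) :
    ∃ Y, IsIrredVariety n Y ∧ V ⊆ Y ∧ Y ⊆ W ∧ f ∈ vanishingIdeal n Y ∧ dim n W ≤ dim n Y + 1 := by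
  have := hV.isPrime_vanishingIdeal
  have := hW.isPrime_vanishingIdeal
  obtain ⟨Q, hQ, hQV⟩ := Ideal.exists_minimalPrimes_le
    (sup_le (vanishingIdeal_anti hVW) ((Ideal.span_singleton_le_iff_mem _).2 hf))
  have := hQ.1.1
  have hQI := vanishingIdeal_zeroLocus Q
  refine ⟨zeroLocus n Q, isIrredVariety_zeroLocus Q, subset_zeroLocus_iff.2 hQV, ?_, ?_, ?_⟩
  · rw [← vanishingIdeal_le_iff hW.1, hQI]
    exact le_sup_left.trans hQ.1.2
  · rw [hQI]
    exact le_sup_right.trans hQ.1.2 (Ideal.mem_span_singleton_self f)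
  · have := ringKrullDim_quotient_le_add_one ℂ hQ
    rw [ringKrullDim_eq_dim hW, ← hQI, ringKrullDim_eq_dim (isIrredVariety_zeroLocus Q)] at this
    exact_mod_cast this

end Dictionary

section HilbertFunction

variable {n} {V : Set (Fin n → ℂ)}

lemma hilbert_eq (V : Set (Fin n → ℂ)) (m : ℕ) :
    hilbert n V m = Module.finrank ℂ
      ↥(affineForms ℂ (fun i => Ideal.Quotient.mk (vanishingIdeal n V) (X i)) ^ m) := by
  rw [hilbert, map_restrictTotalDegree]
  rfl

lemma hilbert_mul_le (hV : IsIrredVariety n V) (m t : ℕ) :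
    hilbert n V m * (t + 1) ^ dim n V ≤ hilbert n V (m + dim n V * t) * (m + 1) ^ dim n V := by
  have := hV.isPrime_vanishingIdeal
  obtain ⟨_, _, h⟩ := exists_isLinearNormalization_vanishingIdeal hV
  simpa only [hilbert_eq] using h.finrank_affineForms_pow_mul_le (aeval_mk_X_surjective _) m t

end HilbertFunction

section AlgebraPoints

lemma finite_setOf_algHom_eq {K A B : Type*} [Field K] [CommRing A] [Algebra K A] [CommRing B]
    [Algebra B A] [Module.Finite B A] (φ : B →+* K) :
    {τ : A →ₐ[K] K | (τ : A →+* K).comp (algebraMap B A) = φ}.Finite := by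
  let _ : Algebra B K := φ.toAlgebra
  let restrict (τ : {τ : A →ₐ[K] K | (τ : A →+* K).comp (algebraMap B A) = φ}) : A →ₐ[B] K :=
    { (τ : A →ₐ[K] K) with commutes' := fun b => DFunLike.congr_fun τ.2 b }
  exact Finite.of_injective restrict fun τ₁ τ₂ h =>
    Subtype.ext (AlgHom.ext fun a => DFunLike.congr_fun h a)

variable {K A : Type*} [Field K] [IsAlgClosed K] [CommRing A] [Algebra K A]

variable (K) in
lemma exists_ker_algHom_eq [Algebra.FiniteType K A] (M : Ideal A) [M.IsMaximal] :
    ∃ τ : A →ₐ[K] K, RingHom.ker τ = M := by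
  let _ := Ideal.Quotient.field M
  have := finite_of_finite_type_of_isJacobsonRing K (A ⧸ M)
  let residueField : K ≃ₐ[K] A ⧸ M := AlgEquiv.ofBijective (Algebra.ofId K (A ⧸ M))
    IsAlgClosed.algebraMap_bijective_of_isIntegral
  refine ⟨residueField.symm.toAlgHom.comp (Ideal.Quotient.mkₐ K M), Ideal.ext fun a => ?_⟩
  simp [RingHom.mem_ker, Ideal.Quotient.eq_zero_iff_mem]

variable (K) in
lemma exists_algHom_apply_ne_zero [Algebra.FiniteType K A] [IsReduced A] {g : A} (hg : g ≠ 0) :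
    ∃ τ : A →ₐ[K] K, τ g ≠ 0 := by
  have : IsJacobsonRing A := isJacobsonRing_of_finiteType (A := K)
  have hg : g ∉ (⊥ : Ideal A).jacobson := by
    rwa [IsJacobsonRing.out inferInstance Ideal.isRadical_bot]
  simp only [Ideal.jacobson, Submodule.mem_sInf, not_forall] at hg
  obtain ⟨M, ⟨-, _⟩, hgM⟩ := hg
  obtain ⟨τ, rfl⟩ := exists_ker_algHom_eq K M
  exact ⟨τ, hgM⟩

lemma exists_algHom_comp_injective [Algebra.FiniteType K A] {Ω ι : Type*} [CommRing Ω] [IsDomain Ω]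
    [Algebra K Ω] [Finite ι] {σ : ι → A →ₐ[K] Ω} (hσ : Function.Injective σ) :
    ∃ (R : Subalgebra K Ω) (hR : ∀ i a, σ i a ∈ R) (ρ : R →ₐ[K] K),
      Function.Injective fun i => ρ.comp ((σ i).codRestrict R (hR i)) := by
  classical
  have := Fintype.ofFinite ι
  obtain ⟨s, hs⟩ := Algebra.FiniteType.out (R := K) (A := A)
  let R := Algebra.adjoin K (⋃ i, σ i '' s)
  have finiteType : Algebra.FiniteType K R := R.fg_iff_finiteType.1 <|
    Subalgebra.fg_def.2 ⟨_, finite_iUnion fun i => s.finite_toSet.image (σ i), rfl⟩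
  have range_le (i : ι) : (σ i).range ≤ R := by
    rw [← Algebra.map_top, ← hs, AlgHom.map_adjoin]
    exact Algebra.adjoin_mono (subset_iUnion_of_subset i subset_rfl)
  have hR (i : ι) (a : A) : σ i a ∈ R := range_le i ⟨a, rfl⟩
  have separating (q : ι × ι) : ∃ a, q.1 ≠ q.2 → σ q.1 a ≠ σ q.2 a := by
    rcases eq_or_ne q.1 q.2 with h | h
    · exact ⟨0, absurd h⟩
    · obtain ⟨a, ha⟩ := DFunLike.ne_iff.1 (hσ.ne h)
      exact ⟨a, fun _ => ha⟩
  choose a ha using separating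
  let difference (q : ι × ι) : R := ⟨σ q.1 (a q), hR _ _⟩ - ⟨σ q.2 (a q), hR _ _⟩
  have discriminant_ne_zero : ∏ q ∈ Finset.univ.offDiag, difference q ≠ 0 :=
    Finset.prod_ne_zero_iff.2 fun q hq => sub_ne_zero.2 fun h =>
      ha q (Finset.mem_offDiag.1 hq).2.2 (congrArg Subtype.val h)
  obtain ⟨ρ, hρ⟩ := exists_algHom_apply_ne_zero K discriminant_ne_zero
  rw [map_prod, Finset.prod_ne_zero_iff] at hρ
  refine ⟨R, hR, ρ, fun i j hij => by_contra fun hne => hρ (i, j) (by simpa using hne) ?_⟩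
  rw [map_sub, sub_eq_zero]
  exact DFunLike.congr_fun hij (a (i, j))

variable {B : Type*} [CommRing B] [Algebra B A]

lemma finrank_le_card_algHom_algebraicClosure [IsDomain B] [CharZero B] [IsDomain A]
    [Module.Finite B A] [FaithfulSMul B A] :
    Module.finrank B A ≤ Nat.card (A →ₐ[B] AlgebraicClosure (FractionRing B)) := by
  have : FaithfulSMul B (FractionRing A) := .trans B A (FractionRing A)
  let _ : Algebra (FractionRing B) (FractionRing A) := FractionRing.liftAlgebra B _
  have := FractionRing.isScalarTower_liftAlgebra B (FractionRing A)
  have : FiniteDimensional (FractionRing B) (FractionRing A) :=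
    .of_isLocalization B A (nonZeroDivisors B)
  have : CharZero (FractionRing B) :=
    charZero_of_injective_algebraMap (IsFractionRing.injective B (FractionRing B))
  let restrict (g : FractionRing A →ₐ[FractionRing B] AlgebraicClosure (FractionRing B)) :
      A →ₐ[B] AlgebraicClosure (FractionRing B) :=
    (g.restrictScalars B).comp (IsScalarTower.toAlgHom B A (FractionRing A))
  have restrict_injective : Function.Injective restrict := fun g₁ g₂ h =>
    AlgHom.coe_ringHom_injective <|
      IsFractionRing.ringHom_ext (A := A) fun a => DFunLike.congr_fun h a
  calc Module.finrank B A
      = Module.finrank (FractionRing B) (FractionRing A) := (IsFractionRing.finrank_eq ..).symm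
    _ = Nat.card (FractionRing A →ₐ[FractionRing B] AlgebraicClosure (FractionRing B)) := by
      rw [← AlgHom.card _ _ (AlgebraicClosure (FractionRing B)), Nat.card_eq_fintype_card]
    _ ≤ _ := Nat.card_le_card_of_injective restrict restrict_injective

theorem exists_finrank_le_ncard_algHom [CharZero K] [Algebra.FiniteType K A] [IsDomain B]
    [Algebra K B] [IsScalarTower K B A] [IsDomain A] [Module.Finite B A] [FaithfulSMul B A] :
    ∃ τ₀ : A →ₐ[K] K, Module.finrank B A ≤ {τ : A →ₐ[K] K |
      (τ : A →+* K).comp (algebraMap B A) = (τ₀ : A →+* K).comp (algebraMap B A)}.ncard := by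
  have : CharZero B := charZero_of_injective_algebraMap (algebraMap K B).injective
  let Ω := AlgebraicClosure (FractionRing B)
  obtain ⟨R, hR, ρ, hρ⟩ := exists_algHom_comp_injective (K := K) (A := A)
    (σ := fun σ : A →ₐ[B] Ω => σ.restrictScalars K) (AlgHom.restrictScalars_injective K)
  let specialization (σ : A →ₐ[B] Ω) : A →ₐ[K] K :=
    ρ.comp ((σ.restrictScalars K).codRestrict R (hR σ))
  have : Nonempty (A →ₐ[B] Ω) := (Nat.card_pos_iff.1 <|
    (Module.finrank_pos (R := B) (M := A)).trans_le finrank_le_card_algHom_algebraicClosure).1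
  let σ₀ : A →ₐ[B] Ω := Classical.arbitrary _
  refine ⟨specialization σ₀, finrank_le_card_algHom_algebraicClosure.trans ?_⟩
  rw [← ncard_univ, ← ncard_image_of_injective univ hρ]
  refine ncard_le_ncard ?_ (finite_setOf_algHom_eq _)
  rintro _ ⟨σ, -, rfl⟩
  ext b
  refine congrArg ρ (Subtype.ext ?_)
  exact (σ.commutes b).trans (σ₀.commutes b).symm

end AlgebraPoints

section LinearIndependence

lemma isMaximal_of_finite_setOf_isMaximal {A : Type*} [CommRing A] [IsJacobsonRing A] {Q : Ideal A}
    [hQ : Q.IsPrime] (h : {M : Ideal A | Q ≤ M ∧ M.IsMaximal}.Finite) : Q.IsMaximal := by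
  have inf_le : h.toFinset.inf id ≤ Q := by
    rw [Finset.inf_id_eq_sInf, h.coe_toFinset]
    exact (IsJacobsonRing.out ‹_› hQ.isRadical).le
  obtain ⟨M, hM, hMQ⟩ := hQ.inf_le'.1 inf_le
  obtain ⟨hQM, hM⟩ := h.mem_toFinset.1 hM
  rwa [hQM.antisymm hMQ]

lemma mem_minimalPrimes_of_pow_mul_mem {A : Type*} [CommRing A] [IsJacobsonRing A] {J M : Ideal A}
    [hM : M.IsMaximal] (hJM : J ≤ M) {s u : A} {N : ℕ} (hu : u ∉ M) (hsu : s ^ N * u ∈ J)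
    (hfin : {M' : Ideal A | J ⊔ Ideal.span {s} ≤ M' ∧ M'.IsMaximal}.Finite) :
    M ∈ J.minimalPrimes := by
  refine ⟨⟨hM.isPrime, hJM⟩, fun Q ⟨_, hJQ⟩ hQM => ?_⟩
  have hsQ : s ∈ Q := ((‹Q.IsPrime›.mem_or_mem (hJQ hsu)).resolve_right
    fun h => hu (hQM h)) |> ‹Q.IsPrime›.mem_of_pow_mem N
  have : Q.IsMaximal := isMaximal_of_finite_setOf_isMaximal <| hfin.subset fun M' ⟨hQM', hM'⟩ =>
    ⟨(sup_le hJQ ((Ideal.span_singleton_le_iff_mem Q).2 hsQ)).trans hQM', hM'⟩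
  exact (this.eq_of_le hM.ne_top hQM).ge

lemma height_lt_of_mem_minimalPrimes_span_range {A : Type*} [CommRing A] [IsNoetherianRing A]
    {e : ℕ} {k : Fin e} {g : {l // l ≠ k} → A} {M : Ideal A}
    (hM : M ∈ (Ideal.span (range g)).minimalPrimes) : M.height < e := by
  refine (Ideal.height_le_card_of_mem_minimalPrimes_span (finite_range g) hM).trans_lt ?_
  have card_le : (range g).ncard ≤ Nat.card {l // l ≠ k} := by
    rw [← image_univ, ← ncard_univ]
    exact ncard_image_le finite_univ
  have card_lt : Nat.card {l // l ≠ k} < e := by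
    simpa using Fintype.card_subtype_lt (p := (· ≠ k)) (x := k) (by simp)
  exact_mod_cast card_le.trans_lt card_lt

lemma exists_forall_eq_X_pow_mul {R ι : Type*} [CommRing R] (q : ι → Polynomial R) {i : ι}
    (hi : q i ≠ 0) : ∃ (s : ℕ) (r : ι → Polynomial R),
      (∀ j, q j = Polynomial.X ^ s * r j) ∧ ∃ j, (r j).eval 0 ≠ 0 := by
  obtain ⟨j, hj, hmin⟩ := exists_minimalFor_of_wellFoundedLT (fun j => q j ≠ 0)
    (fun j => (q j).natTrailingDegree) ⟨i, hi⟩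
  have X_pow_dvd (l : ι) : Polynomial.X ^ (q j).natTrailingDegree ∣ q l := by
    rw [Polynomial.X_pow_dvd_iff]
    intro d hd
    by_cases hl : q l = 0
    · rw [hl, Polynomial.coeff_zero]
    · have := (Nat.le_total ..).elim (hmin hl) id
      exact Polynomial.coeff_eq_zero_of_lt_natTrailingDegree (hd.trans_le this)
  choose r hr using X_pow_dvd
  refine ⟨_, r, hr, j, ?_⟩
  have coeff_eq := congrArg (fun p => p.coeff (q j).natTrailingDegree) (hr j)
  simp only [Polynomial.coeff_X_pow_mul', le_rfl, if_true, Nat.sub_self] at coeff_eq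
  rw [← Polynomial.coeff_zero_eq_eval_zero, ← coeff_eq]
  exact Polynomial.trailingCoeff_nonzero_iff_nonzero.2 hj

variable {K ι : Type*} [Field K]

/-- Restriction of polynomial functions to the line through the origin with direction `v`. -/
def lineRestriction (v : ι → K) : MvPolynomial ι K →ₐ[K] Polynomial K :=
  aeval fun i => Polynomial.C (v i) * Polynomial.X

lemma eval_one_lineRestriction (v : ι → K) (p : MvPolynomial ι K) :
    (lineRestriction v p).eval 1 = eval v p := by
  have : (Polynomial.aeval 1).comp (lineRestriction v) = aeval v := by
    ext i
    simp [lineRestriction]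
  exact DFunLike.congr_fun this p

lemma sub_aeval_lineRestriction_mem {A : Type*} [CommRing A] [Algebra K A] {J : Ideal A}
    (φ : MvPolynomial ι K →ₐ[K] A) {v : ι → K} {s : A} (h : ∀ i, φ (X i) - v i • s ∈ J)
    (p : MvPolynomial ι K) : φ p - Polynomial.aeval s (lineRestriction v p) ∈ J := by
  have : (Ideal.Quotient.mkₐ K J).comp φ =
      (Ideal.Quotient.mkₐ K J).comp ((Polynomial.aeval s).comp (lineRestriction v)) := by
    ext i
    simpa [lineRestriction, Algebra.smul_def] using Ideal.Quotient.eq.2 (h i)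
  exact Ideal.Quotient.eq.1 (DFunLike.congr_fun this p)

variable {A : Type*} [CommRing A] [Algebra K A]

lemma isMaximal_ker_algHom (τ : A →ₐ[K] K) : (RingHom.ker τ).IsMaximal :=
  RingHom.ker_isMaximal_of_surjective _ fun a => ⟨algebraMap K A a, by simp⟩

lemma algHom_eq_of_ker_le {τ₁ τ₂ : A →ₐ[K] K} (h : RingHom.ker τ₁ ≤ RingHom.ker τ₂) : τ₁ = τ₂ := by
  ext a
  have : a - algebraMap K A (τ₁ a) ∈ RingHom.ker τ₂ := h (by simp [RingHom.mem_ker])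
  exact (sub_eq_zero.1 (by simpa [RingHom.mem_ker] using this)).symm

lemma exists_algHom_apply_eq_ite {ι : Type*} [Finite ι] [DecidableEq ι] {τ : ι → A →ₐ[K] K}
    (hτ : Function.Injective τ) : ∃ b : ι → A, ∀ i j, τ i (b j) = if i = j then 1 else 0 := by
  have coprime : Pairwise (Function.onFun IsCoprime fun i => RingHom.ker (τ i)) := fun i j hij => by
    have (l : ι) := isMaximal_ker_algHom (τ l)
    exact Ideal.isCoprime_of_isMaximal fun h => hij (hτ (algHom_eq_of_ker_le h.le))
  choose b hb using fun j => Ideal.exists_forall_sub_mem_ideal coprime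
    fun i => if i = j then (1 : A) else 0
  refine ⟨b, fun i j => ?_⟩
  have := sub_eq_zero.1 ((map_sub (τ i) _ _).symm.trans (hb j i))
  rw [this, apply_ite (τ i), map_one, map_zero]

variable {e : ℕ} [Algebra (MvPolynomial (Fin e) K) A]
  [IsScalarTower K (MvPolynomial (Fin e) K) A]

lemma algHom_algebraMap_eq_eval (τ : A →ₐ[K] K) (p : MvPolynomial (Fin e) K) :
    τ (algebraMap _ A p) = eval (fun l => τ (algebraMap (MvPolynomial (Fin e) K) A (X l))) p := by
  have : τ.comp (IsScalarTower.toAlgHom K (MvPolynomial (Fin e) K) A) =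
      aeval fun l => τ (algebraMap (MvPolynomial (Fin e) K) A (X l)) := by
    ext l
    simp
  exact DFunLike.congr_fun this p

lemma exists_pow_mul_sum_mem {ι : Type*} [Fintype ι] {J : Ideal A} {s : A} {v : Fin e → K}
    (hJ : ∀ l, algebraMap (MvPolynomial (Fin e) K) A (X l) - v l • s ∈ J)
    {c : ι → MvPolynomial (Fin e) K} {i : ι} (hi : eval v (c i) ≠ 0) {b : ι → A}
    (hc : ∑ j, c j • b j = 0) :
    ∃ (N : ℕ) (r : ι → Polynomial K), s ^ N * ∑ j, Polynomial.aeval s (r j) * b j ∈ J ∧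
      ∃ j, (r j).eval 0 ≠ 0 := by
  obtain ⟨N, r, hr, hj⟩ := exists_forall_eq_X_pow_mul (fun j => lineRestriction v (c j)) (i := i)
    fun h => hi (by rw [← eval_one_lineRestriction, h, Polynomial.eval_zero])
  refine ⟨N, r, ?_, hj⟩
  have restrict_mem := Ideal.sum_mem J fun j (_ : j ∈ Finset.univ) => J.mul_mem_right (b j)
    (sub_aeval_lineRestriction_mem (IsScalarTower.toAlgHom K (MvPolynomial (Fin e) K) A) hJ (c j))
  simp only [IsScalarTower.coe_toAlgHom', sub_mul, ← Algebra.smul_def, Finset.sum_sub_distrib, hc,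
    zero_sub, neg_mem_iff, hr, map_mul, map_pow, Polynomial.aeval_X] at restrict_mem
  simpa only [Finset.mul_sum, mul_assoc] using restrict_mem

lemma linearIndependent_of_finite_zeros [IsAlgClosed K] [Algebra.FiniteType K A] {ι : Type*}
    [Finite ι] [DecidableEq ι] (hA : ∀ M : Ideal A, M.IsMaximal → (e : ℕ∞) ≤ M.height)
    {τ : ι → A →ₐ[K] K}
    (hτ : range τ = {τ | ∀ l, τ (algebraMap (MvPolynomial (Fin e) K) A (X l)) = 0})
    {b : ι → A} (hb : ∀ i j, τ i (b j) = if i = j then 1 else 0) :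
    LinearIndependent (MvPolynomial (Fin e) K) b := by
  have := Fintype.ofFinite ι
  have : IsJacobsonRing A := isJacobsonRing_of_finiteType (A := K)
  have : IsNoetherianRing A := Algebra.FiniteType.isNoetherianRing K A
  let ℓ (l : Fin e) : A := algebraMap (MvPolynomial (Fin e) K) A (X l)
  have τ_ℓ (i : ι) (l : Fin e) : τ i (ℓ l) = 0 := (hτ.le ⟨i, rfl⟩ :) l
  rw [Fintype.linearIndependent_iff]
  intro c hc i
  by_contra hi
  have c_zero : eval 0 (c i) = 0 := by
    have : τ i (algebraMap _ A (c i)) = 0 := by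
      simpa [Algebra.smul_def, hb] using congrArg (τ i) hc
    rwa [algHom_algebraMap_eq_eval, funext (τ_ℓ i)] at this
  obtain ⟨v, hv⟩ := exists_eval_ne_zero hi
  obtain ⟨k, hk⟩ : ∃ k, v k ≠ 0 := Function.ne_iff.1 fun h => hv (h ▸ c_zero)
  let s := (v k)⁻¹ • ℓ k
  let g (l : {l // l ≠ k}) : A := ℓ l - v l • s
  have ℓ_mem (l : Fin e) : ℓ l - v l • s ∈ Ideal.span (range g) := by
    rcases eq_or_ne l k with rfl | hl
    · simp [s, smul_smul, hk]
    · exact Ideal.subset_span ⟨⟨l, hl⟩, rfl⟩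
  obtain ⟨N, r, hmem, j, hj⟩ := exists_pow_mul_sum_mem ℓ_mem hv hc
  have τ_s : τ j s = 0 := by simp [s, τ_ℓ]
  have := isMaximal_ker_algHom (τ j)
  refine (hA _ this).not_gt <| height_lt_of_mem_minimalPrimes_span_range <|
    mem_minimalPrimes_of_pow_mul_mem ?_ ?_ hmem ?_
  · rw [Ideal.span_le]
    rintro - ⟨l, rfl⟩
    simp [g, RingHom.mem_ker, τ_ℓ, τ_s]
  · simpa [RingHom.mem_ker, ← Polynomial.aeval_algHom_apply, hb, τ_s] using hj
  · refine (finite_range fun i => RingHom.ker (τ i)).subset fun M ⟨hM, _⟩ => ?_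
    obtain ⟨τ', rfl⟩ := exists_ker_algHom_eq K M
    have hs : τ' s = 0 := hM (Ideal.mem_sup_right (Ideal.mem_span_singleton_self s))
    obtain ⟨i, rfl⟩ : τ' ∈ range τ := hτ.ge fun l => by
      have : τ' (ℓ l - v l • s) = 0 := hM (Ideal.mem_sup_left (ℓ_mem l))
      simpa [hs] using this
    exact ⟨i, rfl⟩

end LinearIndependence

lemma ncard_algHom_le {K A σ : Type*} [Field K] [IsAlgClosed K] [CommRing A] [Algebra K A]
    [Finite σ] {x : σ → A} (hx : Function.Surjective (aeval x : MvPolynomial σ K →ₐ[K] A)) {e : ℕ}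
    {ℓ : Fin e → A} (hℓ : ∀ l, ℓ l ∈ affineForms K x)
    (hA : ∀ M : Ideal A, M.IsMaximal → (e : ℕ∞) ≤ M.height) {D : ℕ}
    (hD : ∀ m, Module.finrank K ↥(affineForms K x ^ m) ≤ D * (m + 1) ^ e)
    (hfin : {τ : A →ₐ[K] K | ∀ l, τ (ℓ l) = 0}.Finite) :
    {τ : A →ₐ[K] K | ∀ l, τ (ℓ l) = 0}.ncard ≤ D * (e + 1) ^ e := by
  classical
  let _ : Algebra (MvPolynomial (Fin e) K) A := (aeval ℓ : _ →ₐ[K] A).toAlgebra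
  have : IsScalarTower K (MvPolynomial (Fin e) K) A :=
    IsScalarTower.of_algebraMap_eq' (aeval ℓ).comp_algebraMap.symm
  have : Algebra.FiniteType K A := .of_surjective _ hx
  have algebraMap_X (l : Fin e) : algebraMap (MvPolynomial (Fin e) K) A (X l) = ℓ l := aeval_X ℓ l
  set S := {τ : A →ₐ[K] K | ∀ l, τ (ℓ l) = 0}
  have := hfin.to_subtype
  let τ : Fin (Nat.card S) → A →ₐ[K] K := Subtype.val ∘ (Finite.equivFin S).symm
  have range_τ : range τ = {τ | ∀ l, τ (algebraMap (MvPolynomial (Fin e) K) A (X l)) = 0} := by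
    rw [range_comp, Equiv.range_eq_univ, image_univ, Subtype.range_coe]
    simp only [algebraMap_X, S]
  obtain ⟨b, hb⟩ := exists_algHom_apply_eq_ite (τ := τ)
    (Subtype.val_injective.comp (Finite.equivFin S).symm.injective)
  have linearIndependent := linearIndependent_of_finite_zeros hA range_τ hb
  choose M hM using fun i => exists_mem_affineForms_pow hx (b i)
  let m := Finset.univ.sup M
  have b_mem (i : Fin (Nat.card S)) : b i ∈ affineForms K x ^ m :=
    affineForms_pow_mono x (Finset.le_sup (Finset.mem_univ i)) (hM i)
  rw [← Nat.card_coe_set_eq]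
  refine Nat.le_of_mul_le_mul_right ?_ (pow_pos m.succ_pos e)
  calc Nat.card S * (m + 1) ^ e
      ≤ Module.finrank K ↥(affineForms K x ^ (m + e * m)) :=
        card_mul_le_finrank_affineForms_pow (fun l => algebraMap_X l ▸ hℓ l) b_mem
          linearIndependent m
    _ ≤ D * (m + e * m + 1) ^ e := hD _
    _ ≤ D * ((e + 1) * (m + 1)) ^ e := by gcongr; lia
    _ = D * (e + 1) ^ e * (m + 1) ^ e := by rw [mul_pow, mul_assoc]

section LinearSections

lemma exists_linearMap_mem_iff {K E : Type*} [Field K] [AddCommGroup E] [Module K E]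
    [FiniteDimensional K E] {L : AffineSubspace K E} (hL : (L : Set E).Nonempty) {e : ℕ}
    (h : Module.finrank K L.direction + e = Module.finrank K E) :
    ∃ (F : E →ₗ[K] Fin e → K) (c : Fin e → K), ∀ a, a ∈ L ↔ F a = c := by
  obtain ⟨p, hp⟩ := hL
  have finrank_eq : Module.finrank K (E ⧸ L.direction) = Module.finrank K (Fin e → K) := by
    have := L.direction.finrank_quotient_add_finrank
    rw [Module.finrank_fin_fun]
    lia
  let φ := LinearEquiv.ofFinrankEq _ _ finrank_eq
  refine ⟨φ.toLinearMap ∘ₗ L.direction.mkQ, φ (L.direction.mkQ p), fun a => ?_⟩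
  rw [LinearMap.comp_apply, LinearEquiv.coe_coe, φ.injective.eq_iff, Submodule.mkQ_apply,
    Submodule.mkQ_apply, Submodule.Quotient.eq, ← vsub_eq_sub,
    AffineSubspace.vsub_right_mem_direction_iff_mem hp]

variable {K A : Type*} [Field K] [CommRing A] [Algebra K A] {m e : ℕ} {x : Fin m → A}

lemma algHom_sum_smul (F : (Fin m → K) →ₗ[K] Fin e → K) (τ : A →ₐ[K] K) (l : Fin e) :
    τ (∑ k, F (Pi.single k 1) l • x k) = F (fun k => τ (x k)) l := by
  rw [← F.toMatrix'_mulVec]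
  simp [Matrix.mulVec, dotProduct]

lemma IsLinearNormalization.exists_surjective_linearMap {y : Fin e → A}
    (h : IsLinearNormalization K x y) : ∃ F : (Fin m → K) →ₗ[K] Fin e → K,
      Function.Surjective F ∧ ∀ l, y l = ∑ k, F (Pi.single k 1) l • x k := by
  choose M hM using fun l => (Submodule.mem_span_range_iff_exists_fun K).1 (h.mem_span l)
  have rows : LinearIndependent K M := by
    have := h.algebraicIndependent.linearIndependent
    rw [← _root_.funext hM] at this
    exact .of_comp (Fintype.linearCombination K x) this
  refine ⟨(Matrix.of M).mulVecLin, LinearMap.range_eq_top.1 ?_, fun l => by simp [← hM]⟩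
  exact Submodule.eq_top_of_finrank_eq <| rows.rank_matrix.trans (by simp)

lemma exists_affineForms_eq_zero_iff (x : Fin m → A) {L : AffineSubspace K (Fin m → K)}
    (hL : (L : Set (Fin m → K)).Nonempty) (h : Module.finrank K L.direction + e = m) :
    ∃ ℓ : Fin e → A, (∀ l, ℓ l ∈ affineForms K x) ∧
      ∀ τ : A →ₐ[K] K, (fun k => τ (x k)) ∈ L ↔ ∀ l, τ (ℓ l) = 0 := by
  obtain ⟨F, c, hF⟩ := exists_linearMap_mem_iff hL (by rw [h, Module.finrank_fin_fun])
  refine ⟨fun l => ∑ k, F (Pi.single k 1) l • x k - algebraMap K A (c l), fun l => ?_, fun τ => ?_⟩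
  · refine sub_mem (sum_mem fun k _ => Submodule.smul_mem _ _ (apply_mem_affineForms x k)) ?_
    exact one_le_affineForms x (Submodule.algebraMap_mem _)
  · simp only [hF, _root_.funext_iff, map_sub, algHom_sum_smul, AlgHom.commutes,
      Algebra.algebraMap_self, RingHom.id_apply, sub_eq_zero]

lemma IsLinearNormalization.exists_affineSubspace {y : Fin e → A} (h : IsLinearNormalization K x y)
    (τ₀ : A →ₐ[K] K) : ∃ L : AffineSubspace K (Fin m → K), Module.finrank K L.direction + e = m ∧
      ∀ τ : A →ₐ[K] K, (fun k => τ (x k)) ∈ L ↔ ∀ l, τ (y l) = τ₀ (y l) := by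
  obtain ⟨F, hF, hy⟩ := h.exists_surjective_linearMap
  refine ⟨AffineSubspace.mk' (fun k => τ₀ (x k)) (LinearMap.ker F), ?_, fun τ => ?_⟩
  · have := F.finrank_range_add_finrank_ker
    rw [LinearMap.range_eq_top.2 hF, finrank_top, Module.finrank_fin_fun, Module.finrank_fin_fun]
      at this
    rw [AffineSubspace.direction_mk', add_comm, this]
  · rw [AffineSubspace.mem_mk', vsub_eq_sub, LinearMap.mem_ker, map_sub, sub_eq_zero,
      _root_.funext_iff]
    simp only [hy, algHom_sum_smul]

namespace IsLinearNormalization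

variable [IsAlgClosed K] [IsDomain A] [Algebra (MvPolynomial (Fin e) K) A]
  [IsScalarTower K (MvPolynomial (Fin e) K) A]
  (h : IsLinearNormalization K x fun i => algebraMap (MvPolynomial (Fin e) K) A (X i))
  (hx : Function.Surjective (aeval x : MvPolynomial (Fin m) K →ₐ[K] A))

include h hx

lemma exists_ncard_algHom_mem_le : ∃ D, ∀ L : AffineSubspace K (Fin m → K),
    Module.finrank K L.direction + e = m → {τ : A →ₐ[K] K | (fun k => τ (x k)) ∈ L}.Finite →
      {τ : A →ₐ[K] K | (fun k => τ (x k)) ∈ L}.ncard ≤ D := by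
  refine ⟨Module.finrank (MvPolynomial (Fin e) K) A * (e + 1) ^ e, fun L hL hfin => ?_⟩
  rcases (L : Set (Fin m → K)).eq_empty_or_nonempty with hempty | hne
  · obtain rfl := (AffineSubspace.coe_eq_bot_iff L).1 hempty
    simp [AffineSubspace.notMem_bot]
  obtain ⟨ℓ, hℓ, hmem⟩ := exists_affineForms_eq_zero_iff x hne hL
  simp only [hmem] at hfin ⊢
  exact ncard_algHom_le hx hℓ (fun M _ => (h.height_eq hx M).ge) (h.finrank_affineForms_pow_le hx)
    hfin

lemma exists_finrank_affineForms_pow_le_ncard_mul [CharZero K] :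
    ∃ L : AffineSubspace K (Fin m → K), Module.finrank K L.direction + e = m ∧
      {τ : A →ₐ[K] K | (fun k => τ (x k)) ∈ L}.Finite ∧
        ∀ j, Module.finrank K ↥(affineForms K x ^ j) ≤
          {τ : A →ₐ[K] K | (fun k => τ (x k)) ∈ L}.ncard * (j + 1) ^ e := by
  have := h.module_finite hx
  have : FaithfulSMul (MvPolynomial (Fin e) K) A :=
    (faithfulSMul_iff_algebraMap_injective _ _).2 h.algebraMap_injective
  have : Algebra.FiniteType K A := .of_surjective _ hx
  obtain ⟨τ₀, hτ₀⟩ := exists_finrank_le_ncard_algHom (K := K) (A := A)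
    (B := MvPolynomial (Fin e) K)
  obtain ⟨L, hL, hmem⟩ := h.exists_affineSubspace τ₀
  have fiber_eq : {τ : A →ₐ[K] K | (fun k => τ (x k)) ∈ L} =
      {τ : A →ₐ[K] K | (τ : A →+* K).comp (algebraMap (MvPolynomial (Fin e) K) A) =
        (τ₀ : A →+* K).comp (algebraMap (MvPolynomial (Fin e) K) A)} := by
    ext τ
    refine (hmem τ).trans ⟨fun h => RingHom.ext fun p => ?_, fun h l => DFunLike.congr_fun h (X l)⟩
    simp only [RingHom.comp_apply, RingHom.coe_coe]
    rw [algHom_algebraMap_eq_eval, algHom_algebraMap_eq_eval τ₀, _root_.funext h]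
  rw [← fiber_eq] at hτ₀
  exact ⟨L, hL, fiber_eq ▸ finite_setOf_algHom_eq _, fun j =>
    (h.finrank_affineForms_pow_le hx j).trans (Nat.mul_le_mul_right _ hτ₀)⟩

end IsLinearNormalization

end LinearSections

section Degree

variable {n} {V W : Set (Fin n → ℂ)}

lemma dim_le (hV : IsIrredVariety n V) : dim n V ≤ n :=
  (dim_le_dim hV isIrredVariety_univ (subset_univ V)).trans_eq dim_univ

lemma eval_algHom_mk_X {I : Ideal (MvPolynomial (Fin n) ℂ)}
    (τ : (MvPolynomial (Fin n) ℂ ⧸ I) →ₐ[ℂ] ℂ) (f : MvPolynomial (Fin n) ℂ) :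
    eval (fun k => τ (Ideal.Quotient.mk I (X k))) f = τ (Ideal.Quotient.mk I f) :=
  DFunLike.congr_fun (aeval_unique (τ.comp (Ideal.Quotient.mkₐ ℂ I))).symm f

lemma algHom_mk_X_injective (I : Ideal (MvPolynomial (Fin n) ℂ)) :
    Function.Injective fun (τ : (MvPolynomial (Fin n) ℂ ⧸ I) →ₐ[ℂ] ℂ) (k : Fin n) =>
      τ (Ideal.Quotient.mk I (X k)) :=
  fun _ _ h => Ideal.Quotient.algHom_ext _ (MvPolynomial.algHom_ext (congrFun h))

lemma range_algHom_mk_X (hV : IsAlgebraicSet n V) :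
    range (fun (τ : (MvPolynomial (Fin n) ℂ ⧸ vanishingIdeal n V) →ₐ[ℂ] ℂ) (k : Fin n) =>
      τ (Ideal.Quotient.mk (vanishingIdeal n V) (X k))) = V := by
  refine Subset.antisymm (range_subset_iff.2 fun τ => (zeroLocus_vanishingIdeal hV).le ?_)
    fun a ha => ?_
  · intro f hf
    rw [eval_algHom_mk_X, Ideal.Quotient.eq_zero_iff_mem.2 hf, map_zero]
  · have aeval_eq_zero : ∀ f ∈ vanishingIdeal n V, aeval a f = 0 := fun f hf => by
      rw [aeval_eq_eval]
      exact hf a ha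
    have lift_comp_mk := Ideal.Quotient.liftₐ_comp (vanishingIdeal n V) (aeval a) aeval_eq_zero
    refine ⟨Ideal.Quotient.liftₐ _ (aeval a) aeval_eq_zero, ?_⟩
    ext k
    exact (DFunLike.congr_fun lift_comp_mk (X k)).trans (aeval_X a k)

lemma inter_eq_image_algHom (hV : IsAlgebraicSet n V) (S : Set (Fin n → ℂ)) :
    V ∩ S = (fun (τ : (MvPolynomial (Fin n) ℂ ⧸ vanishingIdeal n V) →ₐ[ℂ] ℂ) (k : Fin n) =>
      τ (Ideal.Quotient.mk (vanishingIdeal n V) (X k))) ''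
        {τ | (fun k => τ (Ideal.Quotient.mk (vanishingIdeal n V) (X k))) ∈ S} := by
  nth_rw 1 [← range_algHom_mk_X hV]
  exact image_preimage_eq_range_inter.symm

lemma bddAbove_ncard_inter (hV : IsIrredVariety n V) :
    BddAbove {m | ∃ L : AffineSubspace ℂ (Fin n → ℂ),
      Module.finrank ℂ L.direction = n - dim n V ∧ (V ∩ ↑L).Finite ∧ (V ∩ ↑L).ncard = m} := by
  have := hV.isPrime_vanishingIdeal
  obtain ⟨_, _, h⟩ := exists_isLinearNormalization_vanishingIdeal hV
  have injective := algHom_mk_X_injective (vanishingIdeal n V)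
  obtain ⟨D, hD⟩ := h.exists_ncard_algHom_mem_le (aeval_mk_X_surjective _)
  refine ⟨D, ?_⟩
  rintro - ⟨L, hL, hfin, rfl⟩
  rw [inter_eq_image_algHom hV.1] at hfin ⊢
  rw [ncard_image_of_injective _ injective]
  exact hD L (by rw [hL, Nat.sub_add_cancel (dim_le hV)]) (hfin.of_finite_image injective.injOn)

lemma hilbert_le_degree_mul (hV : IsIrredVariety n V) (m : ℕ) :
    hilbert n V m ≤ degree n V * (m + 1) ^ dim n V := by
  have := hV.isPrime_vanishingIdeal
  obtain ⟨_, _, h⟩ := exists_isLinearNormalization_vanishingIdeal hV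
  obtain ⟨L, hL, hfin, finrank_le⟩ :=
    h.exists_finrank_affineForms_pow_le_ncard_mul (aeval_mk_X_surjective _)
  rw [hilbert_eq]
  refine (finrank_le m).trans (Nat.mul_le_mul_right _ ?_)
  refine le_csSup (bddAbove_ncard_inter hV) ⟨L, by lia, ?_⟩
  rw [inter_eq_image_algHom hV.1]
  exact ⟨hfin.image _, ncard_image_of_injective _ (algHom_mk_X_injective _)⟩

end Degree

section HilbertGrowth

variable {n} {V W : Set (Fin n → ℂ)}

/-- The polynomials of total degree at most `m` that vanish on `V`, i.e. the degree `≤ m` part of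
the ideal `I(V)`. -/
def vanishingIdealLE (V : Set (Fin n → ℂ)) (m : ℕ) : Submodule ℂ (MvPolynomial (Fin n) ℂ) :=
  restrictTotalDegree (Fin n) ℂ m ⊓ (vanishingIdeal n V).restrictScalars ℂ

lemma mem_vanishingIdealLE {m : ℕ} {f : MvPolynomial (Fin n) ℂ} :
    f ∈ vanishingIdealLE V m ↔ f.totalDegree ≤ m ∧ f ∈ vanishingIdeal n V := by
  simp [vanishingIdealLE, mem_restrictTotalDegree]

instance finite_vanishingIdealLE (V : Set (Fin n → ℂ)) (m : ℕ) :
    Module.Finite ℂ (vanishingIdealLE V m) :=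
  Submodule.finiteDimensional_of_le inf_le_left

lemma hilbert_add_finrank_vanishingIdealLE (V : Set (Fin n → ℂ)) (m : ℕ) :
    hilbert n V m + Module.finrank ℂ (vanishingIdealLE V m) =
      Module.finrank ℂ (restrictTotalDegree (Fin n) ℂ m) := by
  let q := (Ideal.Quotient.mkₐ ℂ (vanishingIdeal n V)).toLinearMap.domRestrict
    (restrictTotalDegree (Fin n) ℂ m)
  have map_ker : (LinearMap.ker q).map (restrictTotalDegree (Fin n) ℂ m).subtype =
      vanishingIdealLE V m := by
    ext f
    simp [q, mem_vanishingIdealLE, mem_restrictTotalDegree, Ideal.Quotient.eq_zero_iff_mem,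
      and_comm]
  rw [← map_ker, Submodule.finrank_map_subtype_eq, ← q.finrank_range_add_finrank_ker,
    LinearMap.range_domRestrict, hilbert]

lemma hilbert_le_hilbert {m : ℕ} (h : vanishingIdealLE W m ≤ vanishingIdealLE V m) :
    hilbert n V m ≤ hilbert n W m := by
  have := Submodule.finrank_mono h
  have := hilbert_add_finrank_vanishingIdealLE V m
  have := hilbert_add_finrank_vanishingIdealLE W m
  lia

lemma hilbert_le_hilbert_of_subset (h : V ⊆ W) (m : ℕ) : hilbert n V m ≤ hilbert n W m :=
  hilbert_le_hilbert (inf_le_inf_left _ (vanishingIdeal_anti h))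

lemma hilbert_mono (V : Set (Fin n → ℂ)) : Monotone (hilbert n V) := fun m m' h => by
  simpa only [hilbert_eq] using Submodule.finrank_mono (affineForms_pow_mono _ h)

lemma hilbert_pos (hV : V.Nonempty) (m : ℕ) : 0 < hilbert n V m := by
  have : Nontrivial (MvPolynomial (Fin n) ℂ ⧸ vanishingIdeal n V) := by
    obtain ⟨a, ha⟩ := hV
    refine Ideal.Quotient.nontrivial_iff.2 ((Ideal.ne_top_iff_one _).2 fun h => ?_)
    simpa using h a ha
  rw [hilbert_eq, Module.finrank_pos_iff, Submodule.nontrivial_iff_ne_bot]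
  refine (Submodule.ne_bot_iff _).2 ⟨1, ?_, one_ne_zero⟩
  exact affineForms_pow_mono _ m.zero_le (by simp)

lemma hilbert_mul_pow_le (hV : IsIrredVariety n V) {m₀ m : ℕ} (h₀ : 1 ≤ m₀) (hm : m₀ ≤ m) :
    hilbert n V m₀ * m ^ dim n V ≤ (4 * n + 4) ^ n * (hilbert n V m * m₀ ^ dim n V) := by
  have constant_le : (4 * dim n V + 4) ^ dim n V ≤ (4 * n + 4) ^ n :=
    calc _ ≤ (4 * n + 4) ^ dim n V := by gcongr; exact dim_le hV
      _ ≤ _ := by gcongr; exacts [by lia, dim_le hV]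
  refine le_trans ?_ (Nat.mul_le_mul_right _ constant_le)
  generalize hd : dim n V = d
  rcases d.eq_zero_or_pos with rfl | hpos
  · simpa using hilbert_mono V hm
  rcases Nat.lt_or_ge m (2 * m₀) with hlt | hge
  · calc hilbert n V m₀ * m ^ d ≤ hilbert n V m * ((4 * d + 4) * m₀) ^ d := by
          gcongr
          · exact hilbert_mono V hm
          · nlinarith
      _ = (4 * d + 4) ^ d * (hilbert n V m * m₀ ^ d) := by rw [mul_pow, mul_left_comm]
  · let t := (m - m₀) / d
    have dt_le : d * t ≤ m - m₀ := Nat.mul_div_le _ _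
    have lt_dt : m - m₀ < d * (t + 1) := Nat.lt_mul_div_succ _ hpos
    calc hilbert n V m₀ * m ^ d ≤ hilbert n V m₀ * (2 * d * (t + 1)) ^ d := by gcongr; lia
      _ = (2 * d) ^ d * (hilbert n V m₀ * (t + 1) ^ d) := by rw [mul_pow, mul_left_comm]
      _ ≤ (2 * d) ^ d * (hilbert n V (m₀ + d * t) * (m₀ + 1) ^ d) := by
          have := hilbert_mul_le hV m₀ t
          rw [hd] at this
          gcongr
      _ ≤ (2 * d) ^ d * (hilbert n V m * (2 * m₀) ^ d) := by
          gcongr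
          · exact hilbert_mono V (by lia)
          · lia
      _ = (2 * d * 2) ^ d * (hilbert n V m * m₀ ^ d) := by
          rw [mul_pow (2 * d) 2, mul_pow 2 m₀]
          ring
      _ ≤ _ := by gcongr; lia

end HilbertGrowth

section Thresholds

variable {n} {V Y : Set (Fin n → ℂ)} {i m : ℕ}

/-- An envelope of `V` at degree `m`: an irreducible variety containing `V` that the polynomials
of degree at most `m` cannot tell apart from `V`. -/
structure IsEnvelope (V : Set (Fin n → ℂ)) (m : ℕ) (Y : Set (Fin n → ℂ)) : Prop where
  isIrredVariety : IsIrredVariety n Y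
  subset : V ⊆ Y
  vanishingIdealLE_le : vanishingIdealLE V m ≤ vanishingIdealLE Y m

/-- The least degree at which all envelopes of `V` have codimension at least `i`: an upper bound for
the partial degree `δ_i(V)` that is visibly monotone in `i`. -/
def thresholdDeg (V : Set (Fin n → ℂ)) (i : ℕ) : ℕ :=
  sInf {m | ∀ Y, IsEnvelope V m Y → dim n Y + i ≤ n}

lemma IsEnvelope.anti {m' : ℕ} (h : IsEnvelope V m Y) (hm : m' ≤ m) : IsEnvelope V m' Y where
  isIrredVariety := h.isIrredVariety
  subset := h.subset
  vanishingIdealLE_le f hf := by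
    rw [mem_vanishingIdealLE] at hf ⊢
    exact ⟨hf.1, (mem_vanishingIdealLE.1 <|
      h.vanishingIdealLE_le (mem_vanishingIdealLE.2 ⟨hf.1.trans hm, hf.2⟩)).2⟩

lemma IsEnvelope.hilbert_le (h : IsEnvelope V m Y) : hilbert n Y m ≤ hilbert n V m :=
  hilbert_le_hilbert h.vanishingIdealLE_le

lemma isEnvelope_univ (hV : V.Nonempty) : IsEnvelope V 0 univ where
  isIrredVariety := isIrredVariety_univ
  subset := subset_univ V
  vanishingIdealLE_le f hf := by
    obtain ⟨a, ha⟩ := hV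
    obtain ⟨hdeg, hf⟩ := mem_vanishingIdealLE.1 hf
    rw [totalDegree_eq_zero_iff_eq_C.1 (Nat.le_zero.1 hdeg)] at hf ⊢
    have coeff_eq_zero := hf a ha
    rw [eval_C] at coeff_eq_zero
    rw [coeff_eq_zero, C_0]
    exact zero_mem _

lemma exists_forall_isEnvelope_eq (hV : IsAlgebraicSet n V) :
    ∃ m, ∀ Y, IsEnvelope V m Y → Y = V := by
  obtain ⟨F, hF⟩ := IsNoetherian.noetherian (vanishingIdeal n V)
  refine ⟨F.sup totalDegree, fun Y hY => Subset.antisymm ?_ hY.subset⟩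
  rw [← vanishingIdeal_le_iff hV, ← hF, Submodule.span_le]
  intro f hf
  exact (mem_vanishingIdealLE.1 <| hY.vanishingIdealLE_le <|
    mem_vanishingIdealLE.2 ⟨Finset.le_sup hf, hF ▸ Submodule.subset_span hf⟩).2

lemma IsEnvelope.dim_add_le (hV : IsIrredVariety n V) (hi : i ≤ n - dim n V)
    (h : IsEnvelope V m Y) (hm : thresholdDeg V i ≤ m) : dim n Y + i ≤ n := by
  have nonempty : {m | ∀ Y, IsEnvelope V m Y → dim n Y + i ≤ n}.Nonempty := by
    obtain ⟨m, hm⟩ := exists_forall_isEnvelope_eq hV.1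
    refine ⟨m, fun Y hY => ?_⟩
    have := dim_le hV
    rw [hm Y hY]
    lia
  exact Nat.sInf_mem nonempty Y (h.anti hm)

lemma exists_isEnvelope_of_lt_thresholdDeg (hm : m < thresholdDeg V i) :
    ∃ Y, IsEnvelope V m Y ∧ n < dim n Y + i := by
  simpa using Nat.notMem_of_lt_sInf hm

lemma thresholdDeg_mono (hV : IsIrredVariety n V) {j : ℕ} (hij : i ≤ j) (hj : j ≤ n - dim n V) :
    thresholdDeg V i ≤ thresholdDeg V j :=
  Nat.sInf_le fun _ hY => (Nat.add_le_add_left hij _).trans (hY.dim_add_le hV hj le_rfl)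

lemma thresholdDeg_pos (hV : IsIrredVariety n V) (hi : i ≠ 0) (hi' : i ≤ n - dim n V) :
    0 < thresholdDeg V i := by
  refine Nat.pos_of_ne_zero fun h => hi ?_
  have := (isEnvelope_univ hV.2.1).dim_add_le hV hi' h.le
  rw [dim_univ] at this
  lia

lemma maxCompDimEq_of_forall_dim_le {X : Set (Fin n → ℂ)} (hY : IsIrredVariety n Y) (hVY : V ⊆ Y)
    (hYX : Y ⊆ X) (h : ∀ U, IsIrredVariety n U → V ⊆ U → U ⊆ X → dim n U ≤ dim n Y) :
    MaxCompDimEq n X V (dim n Y) := by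
  refine ⟨⟨Y, ⟨hY, hYX, fun U hU hYU hUX => ?_⟩, hVY, rfl⟩, fun U hU hVU => h U hU.1 hVU hU.2.1⟩
  by_contra hne
  exact (dim_lt_dim hY hU (hYU.ssubset_of_ne (Ne.symm hne))).not_ge (h U hU (hVY.trans hYU) hUX)

lemma exists_subset_maxCompDimEq (hV : IsIrredVariety n V) (hi : i ≠ 0)
    {F : Finset (MvPolynomial (Fin n) ℂ)} (hF : ∀ f ∈ F, f ∈ vanishingIdeal n V)
    (h : ∀ Y, IsIrredVariety n Y → V ⊆ Y → Y ⊆ zeroLocus n F → dim n Y + i ≤ n) :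
    ∃ I ⊆ F, MaxCompDimEq n (zeroLocus n I) V (n - i) := by
  classical
  induction F using Finset.induction_on with
  | empty =>
    have := h univ isIrredVariety_univ (subset_univ V) (by simp [zeroLocus])
    rw [dim_univ] at this
    lia
  | insert f F _ ih =>
    by_cases hFi : ∀ Y, IsIrredVariety n Y → V ⊆ Y → Y ⊆ zeroLocus n F → dim n Y + i ≤ n
    · obtain ⟨I, hI, hdim⟩ := ih (fun g hg => hF g (Finset.mem_insert_of_mem hg)) hFi
      exact ⟨I, hI.trans (Finset.subset_insert f F), hdim⟩
    · push Not at hFi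
      obtain ⟨W, hW, hVW, hWF, hdimW⟩ := hFi
      obtain ⟨Y, hY, hVY, hYW, hfY, hdimY⟩ :=
        exists_component_inter hV hW hVW (hF f (Finset.mem_insert_self f F))
      have hYF : Y ⊆ zeroLocus n ↑(insert f F) := by
        rw [subset_zeroLocus_iff, Finset.coe_insert, insert_subset_iff]
        exact ⟨hfY, subset_zeroLocus_iff.1 (hYW.trans hWF)⟩
      have hle := h Y hY hVY hYF
      have dim_eq : dim n Y = n - i := by lia
      refine ⟨insert f F, subset_rfl, dim_eq ▸ maxCompDimEq_of_forall_dim_le hY hVY hYF ?_⟩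
      intro U hU hVU hUF
      have := h U hU hVU hUF
      lia

lemma partialDeg_le_thresholdDeg (hV : IsIrredVariety n V) (hi : i ≠ 0) (hi' : i ≤ n - dim n V) :
    partialDeg n V i ≤ thresholdDeg V i := by
  obtain ⟨F, hF⟩ := Module.Finite.iff_fg.1 (finite_vanishingIdealLE V (thresholdDeg V i))
  have F_mem (f) (hf : f ∈ F) : f ∈ vanishingIdealLE V (thresholdDeg V i) :=
    hF ▸ Submodule.subset_span hf
  obtain ⟨I, hIF, hI⟩ := exists_subset_maxCompDimEq hV hi
    (fun f hf => (mem_vanishingIdealLE.1 (F_mem f hf)).2) fun Y hY hVY hYF => by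
      refine IsEnvelope.dim_add_le hV hi' ⟨hY, hVY, le_inf inf_le_left ?_⟩ le_rfl
      rw [← hF, Submodule.span_le]
      exact subset_zeroLocus_iff.1 hYF
  rw [partialDeg, if_neg hi]
  exact Nat.sInf_le ⟨I, fun f hf => (mem_vanishingIdealLE.1 (F_mem f (hIF hf))).1,
    subset_zeroLocus_iff.2 fun f hf => (mem_vanishingIdealLE.1 (F_mem f (hIF hf))).2, hI⟩

end Thresholds

section Estimate

lemma prod_le_two_pow_mul_prod_min {ι : Type*} {s : Finset ι} {a : ι → ℕ} {m : ℕ}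
    (h : ∀ i ∈ s, a i ≤ 2 * m) : ∏ i ∈ s, a i ≤ 2 ^ s.card * ∏ i ∈ s, min (a i) m := by
  rw [← Finset.prod_const, ← Finset.prod_mul_distrib]
  exact Finset.prod_le_prod' fun i hi => by have := h i hi; lia

lemma prod_min_mul_pow_succ_le (a : ℕ → ℕ) (m : ℕ) {j N : ℕ} (hj : j < N) :
    (∏ i ∈ Finset.Icc 1 (j + 1), min (a i) m) * m ^ (N - (j + 1)) ≤
      (∏ i ∈ Finset.Icc 1 j, min (a i) m) * m ^ (N - j) := by
  rw [Finset.prod_Icc_succ_top (by lia), mul_assoc, show N - j = N - (j + 1) + 1 by lia, pow_succ']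
  gcongr
  exact min_le_right _ _

variable {n} {V W : Set (Fin n → ℂ)}

lemma IsEnvelope.mul_pow_dim_le {Y : Set (Fin n → ℂ)} {P A m₀ m : ℕ} (hY : IsEnvelope V m Y)
    (hm₀ : 1 ≤ m₀) (hm : m₀ ≤ m) (h : P * m₀ ^ dim n Y ≤ A * hilbert n V m₀) :
    P * m ^ dim n Y ≤ A * (4 * n + 4) ^ n * hilbert n V m := by
  refine Nat.le_of_mul_le_mul_right ?_ (pow_pos hm₀ (dim n Y))
  calc P * m ^ dim n Y * m₀ ^ dim n Y = P * m₀ ^ dim n Y * m ^ dim n Y := mul_right_comm _ _ _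
    _ ≤ A * hilbert n V m₀ * m ^ dim n Y := Nat.mul_le_mul_right _ h
    _ ≤ A * hilbert n Y m₀ * m ^ dim n Y := by
        gcongr
        exact hilbert_le_hilbert_of_subset hY.subset m₀
    _ = A * (hilbert n Y m₀ * m ^ dim n Y) := mul_assoc _ _ _
    _ ≤ A * ((4 * n + 4) ^ n * (hilbert n Y m * m₀ ^ dim n Y)) :=
        Nat.mul_le_mul_left _ (hilbert_mul_pow_le hY.isIrredVariety hm₀ hm)
    _ ≤ A * ((4 * n + 4) ^ n * (hilbert n V m * m₀ ^ dim n Y)) := by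
        gcongr
        exact hY.hilbert_le
    _ = _ := by ring

-- The scale is `δ - 1` for `δ` the threshold degree of index `j + 1`, just below the degree at
-- which the envelopes drop to codimension `j + 1`; the maximum with `1` covers `δ = 1`.
lemma exists_prod_thresholdDeg_mul_pow_le (hV : IsIrredVariety n V) {j C : ℕ}
    (hj : j + 1 ≤ n - dim n V) (hC : 0 < C)
    (h : ∀ m, 1 ≤ m → (∃ Y, IsEnvelope V m Y ∧ n ≤ dim n Y + j) →
      (∏ i ∈ Finset.Icc 1 j, min (thresholdDeg V i) m) * m ^ (n - j) ≤ C * hilbert n V m) :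
    ∃ m, 1 ≤ m ∧ m ≤ thresholdDeg V (j + 1) ∧
      (∏ i ∈ Finset.Icc 1 (j + 1), thresholdDeg V i) * m ^ (n - (j + 1)) ≤
        2 ^ (j + 1) * (C * hilbert n V m) := by
  have δ_pos := thresholdDeg_pos hV j.succ_ne_zero hj
  refine ⟨max (thresholdDeg V (j + 1) - 1) 1, le_max_right _ _, by lia, ?_⟩
  set m := max (thresholdDeg V (j + 1) - 1) 1
  have prod_min_le : (∏ i ∈ Finset.Icc 1 (j + 1), min (thresholdDeg V i) m) *
      m ^ (n - (j + 1)) ≤ C * hilbert n V m := by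
    refine (prod_min_mul_pow_succ_le _ m (by lia)).trans ?_
    rcases (show 1 ≤ thresholdDeg V (j + 1) from δ_pos).eq_or_lt with hδ | hδ
    · rw [show m = 1 by lia, one_pow, mul_one]
      exact (Finset.prod_le_one' fun i _ => min_le_right _ _).trans
        (Nat.mul_pos hC (hilbert_pos hV.2.1 1))
    · obtain ⟨Y, hY, hdim⟩ := exists_isEnvelope_of_lt_thresholdDeg
        (show m < thresholdDeg V (j + 1) by lia)
      exact h m (le_max_right _ _) ⟨Y, hY, by lia⟩
  have prod_le := prod_le_two_pow_mul_prod_min (s := Finset.Icc 1 (j + 1))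
    (a := thresholdDeg V) (m := m) fun i hi => by
      have := thresholdDeg_mono hV (Finset.mem_Icc.1 hi).2 hj
      lia
  rw [Nat.card_Icc, Nat.add_sub_cancel] at prod_le
  calc _ ≤ 2 ^ (j + 1) * (∏ i ∈ Finset.Icc 1 (j + 1), min (thresholdDeg V i) m) *
        m ^ (n - (j + 1)) := Nat.mul_le_mul_right _ prod_le
    _ ≤ _ := by rw [mul_assoc]; gcongr

theorem prod_min_thresholdDeg_mul_pow_le (hV : IsIrredVariety n V) {j m : ℕ}
    (hj : j ≤ n - dim n V) (hm : 1 ≤ m) (h : ∃ Y, IsEnvelope V m Y ∧ n ≤ dim n Y + j) :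
    (∏ i ∈ Finset.Icc 1 j, min (thresholdDeg V i) m) * m ^ (n - j) ≤
      ((8 * n + 8) ^ n) ^ (j + 1) * hilbert n V m := by
  induction j generalizing m with
  | zero =>
    obtain ⟨Y, hY, hdim⟩ := h
    have growth := hilbert_mul_pow_le hY.isIrredVariety le_rfl hm
    rw [show dim n Y = n from (dim_le hY.isIrredVariety).antisymm hdim, one_pow, mul_one] at growth
    rw [Finset.Icc_eq_empty_of_lt Nat.zero_lt_one, Finset.prod_empty, one_mul, zero_add, pow_one]
    calc m ^ n ≤ hilbert n Y 1 * m ^ n :=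
          Nat.le_mul_of_pos_left _ (hilbert_pos hY.isIrredVariety.2.1 1)
      _ ≤ (4 * n + 4) ^ n * hilbert n Y m := growth
      _ ≤ _ := by gcongr; exacts [by lia, by lia, hY.hilbert_le]
  | succ j ih =>
    have T_pos : 0 < (8 * n + 8) ^ n := by positivity
    obtain ⟨Y, hY, hdim⟩ := h
    rcases lt_or_ge m (thresholdDeg V (j + 1)) with hlt | hge
    · obtain ⟨Z, hZ, hdimZ⟩ := exists_isEnvelope_of_lt_thresholdDeg hlt
      calc _ ≤ _ := prod_min_mul_pow_succ_le (thresholdDeg V) m (by lia)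
        _ ≤ _ := ih (by lia) hm ⟨Z, hZ, by lia⟩
        _ ≤ _ := by gcongr; lia
    have dim_eq : dim n Y = n - (j + 1) := by
      have := hY.dim_add_le hV hj hge
      lia
    obtain ⟨m₀, hm₀, hm₀_le, le⟩ := exists_prod_thresholdDeg_mul_pow_le hV hj (pow_pos T_pos _)
      fun m hm => ih (by lia) hm
    calc _ ≤ (∏ i ∈ Finset.Icc 1 (j + 1), thresholdDeg V i) * m ^ (n - (j + 1)) := by
          gcongr
          exact min_le_left _ _
      _ ≤ 2 ^ (j + 1) * ((8 * n + 8) ^ n) ^ (j + 1) * (4 * n + 4) ^ n * hilbert n V m := by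
          rw [← mul_assoc, ← dim_eq] at le
          exact dim_eq ▸ hY.mul_pow_dim_le hm₀ (hm₀_le.trans hge) le
      _ ≤ 2 ^ n * ((8 * n + 8) ^ n) ^ (j + 1) * (4 * n + 4) ^ n * hilbert n V m := by
          gcongr <;> lia
      _ = _ := by
          rw [mul_right_comm (2 ^ n), ← mul_pow, show 2 * (4 * n + 4) = 8 * n + 8 by ring,
            ← pow_succ']

theorem prod_partialDeg_le (hV : IsIrredVariety n V) {k : ℕ} (hk : 1 ≤ k) (hk' : k ≤ n - dim n V)
    (hW : IsIrredVariety n W) (hd : dim n W = n - k) (hVW : V ⊆ W) :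
    ∏ i ∈ Finset.Icc 1 k, partialDeg n V i ≤ (2 * (8 * n + 8) ^ n) ^ n * degree n W := by
  obtain ⟨j, rfl⟩ := Nat.exists_eq_add_of_le' hk
  have T_pos : 0 < (8 * n + 8) ^ n := by positivity
  obtain ⟨m, hm, -, le⟩ := exists_prod_thresholdDeg_mul_pow_le hV hk' (pow_pos T_pos _)
    fun m hm => prod_min_thresholdDeg_mul_pow_le hV (by lia) hm
  have hilbert_le : hilbert n V m ≤ degree n W * (2 * m) ^ (n - (j + 1)) :=
    calc hilbert n V m ≤ hilbert n W m := hilbert_le_hilbert_of_subset hVW m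
      _ ≤ degree n W * (m + 1) ^ (n - (j + 1)) := hd ▸ hilbert_le_degree_mul hW m
      _ ≤ _ := by gcongr; lia
  refine Nat.le_of_mul_le_mul_right ?_ (pow_pos hm (n - (j + 1)))
  calc _ ≤ (∏ i ∈ Finset.Icc 1 (j + 1), thresholdDeg V i) * m ^ (n - (j + 1)) := by
        gcongr with i hi
        obtain ⟨hi, hij⟩ := Finset.mem_Icc.1 hi
        exact partialDeg_le_thresholdDeg hV (by lia) (hij.trans hk')
    _ ≤ 2 ^ (j + 1) * (((8 * n + 8) ^ n) ^ (j + 1) * hilbert n V m) := le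
    _ ≤ 2 ^ (j + 1) * (((8 * n + 8) ^ n) ^ n * (degree n W * (2 * m) ^ (n - (j + 1)))) := by
        gcongr; lia
    _ = 2 ^ (j + 1 + (n - (j + 1))) * ((8 * n + 8) ^ n) ^ n * degree n W * m ^ (n - (j + 1)) := by
        rw [mul_pow, pow_add]
        ring
    _ = _ := by rw [show j + 1 + (n - (j + 1)) = n by lia, ← mul_pow]

end Estimate

/-- Corollary 5.7 of the paper: an irreducible variety `W` of dimension
`n - k` containing `V` has degree at least `c(n) δ₁(V) ⋯ δ_k(V)`. -/
theorem statement18 (n : ℕ) :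
    ∃ c : ℝ, 0 < c ∧
      ∀ (V : Set (Fin n → ℂ)) (d : ℕ), IsIrredVariety n V → dim n V = d →
        ∀ k : ℕ, 1 ≤ k → k ≤ n - d →
          ∀ W : Set (Fin n → ℂ), IsIrredVariety n W → dim n W = n - k → V ⊆ W →
            c * ∏ i ∈ Finset.Icc 1 k, (partialDeg n V i : ℝ) ≤ (degree n W : ℝ) := by
  have hpos : (0 : ℝ) < (2 * (8 * n + 8) ^ n) ^ n := by positivity
  refine ⟨((2 * (8 * n + 8) ^ n) ^ n)⁻¹, inv_pos.2 hpos, ?_⟩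
  rintro V d hV rfl k hk hk' W hW hd hVW
  rw [inv_mul_le_iff₀ hpos]
  exact_mod_cast prod_partialDeg_le hV hk hk' hW hd hVW

end Paper
end
end

section
/- Let S be a finite set, T a finite family of subsets of S, and k,b ≥ 1 integers such that S is (k,b)-free with respect to T. Then the number of incidences satisfies ℐ(S,T) ≤ b^{1/k}·|S|·|T|^{1−1/k} + (k−1)·|T|. -/
open MvPolynomial Set

noncomputable section

namespace Paper

variable (n : ℕ)

/-!
Count the pairs `(P, t)` with `P` a `k`-subset of `S` and every point of `P` incident to `t`. Each
`t` incident to `d(t)` points of `S` contributes `(d(t) choose k)` pairs, while each `P` contributes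
at most `b`, so `∑ (d(t) choose k) ≤ b (|S| choose k)`. Comparing binomials with powers bounds
`∑ max(d(t) - k + 1, 0)^k` by `b |S|^k`, and the power mean inequality turns this into a bound for
the sum of the excesses `max(d(t) - k + 1, 0)`.
-/

open scoped Finset

lemma filter_powersetCard_forall {α : Type*} (s : Finset α) (p : α → Prop) [DecidablePred p]
    (k : ℕ) :
    {P ∈ s.powersetCard k | ∀ a ∈ P, p a} = (s.filter p).powersetCard k := by
  ext P
  simp only [Finset.mem_filter, Finset.mem_powersetCard, Finset.subset_iff]
  grind

lemma sum_abs_le_card_rpow_mul_sum_abs_rpow {ι : Type*} (s : Finset ι) (f : ι → ℝ) {p : ℝ}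
    (hp : 1 ≤ p) :
    ∑ i ∈ s, |f i| ≤ (#s : ℝ) ^ (1 - p⁻¹) * (∑ i ∈ s, |f i| ^ p) ^ p⁻¹ := by
  simpa using Real.inner_le_weight_mul_Lp_of_nonneg s hp 1 (|f ·|) (fun _ ↦ zero_le_one)
    (fun _ ↦ abs_nonneg _)

section DoubleCounting

variable {α β : Type*} {R : α → β → Prop} {S : Finset α} {T : Finset β} {k b : ℕ}
  [DecidableRel R]

lemma KBFree.card_filter_forall_lt (hfree : KBFree R S T k b) {P : Finset α}
    (hP : P ∈ S.powersetCard k) : #{t ∈ T | ∀ s ∈ P, R s t} < b := by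
  by_contra! hb
  obtain ⟨hPS, hPk⟩ := Finset.mem_powersetCard.1 hP
  obtain ⟨B, hBsub, hBb⟩ := Finset.exists_subset_card_eq hb
  exact hfree ⟨P, B, hPS, hBsub.trans (Finset.filter_subset _ _), hPk, hBb,
    fun s hs t ht ↦ (Finset.mem_filter.1 (hBsub ht)).2 s hs⟩

variable (R S T k) in
lemma sum_choose_card_filter :
    ∑ t ∈ T, (#{s ∈ S | R s t}).choose k =
      ∑ P ∈ S.powersetCard k, #{t ∈ T | ∀ s ∈ P, R s t} := by
  simp_rw [← Finset.card_powersetCard, ← filter_powersetCard_forall]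
  exact Finset.sum_card_bipartiteAbove_eq_sum_card_bipartiteBelow fun t P ↦ ∀ s ∈ P, R s t

lemma sum_choose_card_filter_le (hcommon : ∀ P ∈ S.powersetCard k, #{t ∈ T | ∀ s ∈ P, R s t} ≤ b) :
    ∑ t ∈ T, (#{s ∈ S | R s t}).choose k ≤ b * (#S).choose k := by
  rw [sum_choose_card_filter, mul_comm, ← Finset.card_powersetCard]
  exact Finset.sum_le_card_nsmul _ _ _ hcommon

lemma sum_card_filter_sub_pow_le
    (hcommon : ∀ P ∈ S.powersetCard k, #{t ∈ T | ∀ s ∈ P, R s t} ≤ b) :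
    ∑ t ∈ T, (#{s ∈ S | R s t} + 1 - k) ^ k ≤ b * #S ^ k := by
  calc
    ∑ t ∈ T, (#{s ∈ S | R s t} + 1 - k) ^ k
    _ ≤ ∑ t ∈ T, (#{s ∈ S | R s t}).descFactorial k := by
      gcongr
      exact Nat.pow_sub_le_descFactorial _ _
    _ = k.factorial * ∑ t ∈ T, (#{s ∈ S | R s t}).choose k := by
      simp_rw [Nat.descFactorial_eq_factorial_mul_choose, Finset.mul_sum]
    _ ≤ k.factorial * (b * (#S).choose k) := by
      gcongr
      exact sum_choose_card_filter_le hcommon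
    _ = b * (#S).descFactorial k := by
      rw [Nat.descFactorial_eq_factorial_mul_choose, mul_left_comm]
    _ ≤ b * #S ^ k := by
      gcongr
      exact Nat.descFactorial_le_pow _ _

lemma sum_card_filter_sub_le (hk : 1 ≤ k)
    (hcommon : ∀ P ∈ S.powersetCard k, #{t ∈ T | ∀ s ∈ P, R s t} ≤ b) :
    ∑ t ∈ T, ((#{s ∈ S | R s t} + 1 - k : ℕ) : ℝ) ≤
      (b : ℝ) ^ (k : ℝ)⁻¹ * #S * (#T : ℝ) ^ (1 - (k : ℝ)⁻¹) := by
  have hpow : ∑ t ∈ T, ((#{s ∈ S | R s t} + 1 - k : ℕ) : ℝ) ^ k ≤ b * (#S : ℝ) ^ k :=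
    mod_cast sum_card_filter_sub_pow_le hcommon
  calc
    ∑ t ∈ T, ((#{s ∈ S | R s t} + 1 - k : ℕ) : ℝ)
    _ ≤ (#T : ℝ) ^ (1 - (k : ℝ)⁻¹) *
          (∑ t ∈ T, ((#{s ∈ S | R s t} + 1 - k : ℕ) : ℝ) ^ k) ^ (k : ℝ)⁻¹ := by
      simpa only [Nat.abs_cast, Real.rpow_natCast] using sum_abs_le_card_rpow_mul_sum_abs_rpow T
        (fun t ↦ ((#{s ∈ S | R s t} + 1 - k : ℕ) : ℝ)) (Nat.one_le_cast.2 hk)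
    _ ≤ (#T : ℝ) ^ (1 - (k : ℝ)⁻¹) * (b * (#S : ℝ) ^ k) ^ (k : ℝ)⁻¹ := by
      gcongr
    _ = (b : ℝ) ^ (k : ℝ)⁻¹ * #S * (#T : ℝ) ^ (1 - (k : ℝ)⁻¹) := by
      rw [Real.mul_rpow (by positivity) (by positivity),
        Real.pow_rpow_inv_natCast (by positivity) (by lia), mul_comm]

theorem statement19_general (hk : 1 ≤ k)
    (hcommon : ∀ P ∈ S.powersetCard k, #{t ∈ T | ∀ s ∈ P, R s t} ≤ b) :
    ∑ t ∈ T, (#{s ∈ S | R s t} : ℝ) ≤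
      (b : ℝ) ^ (1 / (k : ℝ)) * #S * (#T : ℝ) ^ (1 - 1 / (k : ℝ)) + ((k : ℝ) - 1) * #T := by
  have hexcess (d : ℕ) : (d : ℝ) ≤ (d + 1 - k : ℕ) + ((k : ℝ) - 1) := by
    rw [← Nat.cast_pred hk]
    exact_mod_cast (by lia : d ≤ d + 1 - k + (k - 1))
  calc
    ∑ t ∈ T, (#{s ∈ S | R s t} : ℝ)
    _ ≤ ∑ t ∈ T, (((#{s ∈ S | R s t} + 1 - k : ℕ) : ℝ) + ((k : ℝ) - 1)) :=
      Finset.sum_le_sum fun _ _ ↦ hexcess _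
    _ = ∑ t ∈ T, ((#{s ∈ S | R s t} + 1 - k : ℕ) : ℝ) + ((k : ℝ) - 1) * #T := by
      rw [Finset.sum_add_distrib, Finset.sum_const, nsmul_eq_mul, mul_comm (#T : ℝ)]
    _ ≤ (b : ℝ) ^ (1 / (k : ℝ)) * #S * (#T : ℝ) ^ (1 - 1 / (k : ℝ)) + ((k : ℝ) - 1) * #T := by
      simp_rw [one_div]
      gcongr
      exact sum_card_filter_sub_le hk hcommon

end DoubleCounting

open scoped Classical in
lemma incCountAbs_eq_sum_card_filter {α : Type*} (S : Finset α) (T : Finset (Set α)) :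
    incCountAbs S T = ∑ t ∈ T, #{s ∈ S | s ∈ t} := by
  refine Finset.sum_congr rfl fun t _ ↦ ?_
  rw [← Set.ncard_coe_finset, Finset.coe_filter]
  rfl

/-- Lemma 8.2 of the paper, a Kővári–Sós–Turán-type bound: for an abstract
finite set `S`, a finite family `T` of subsets of `S` with `S` `(k,b)`-free with respect to
`T`, the number of incidences is at most `b^{1/k} |S| |T|^{1-1/k} + (k-1) |T|`. -/
theorem statement19 {α : Type*} (S : Finset α) (T : Finset (Set α))
    (hT : ∀ t ∈ T, t ⊆ (↑S : Set α)) (k b : ℕ) (hk : 1 ≤ k) (hb : 1 ≤ b)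
    (hfree : KBFree (fun s t => s ∈ t) S T k b) :
    (incCountAbs S T : ℝ) ≤
      (b : ℝ) ^ ((1 : ℝ) / (k : ℝ)) * (S.card : ℝ) * (T.card : ℝ) ^ (1 - (1 : ℝ) / (k : ℝ))
        + ((k : ℝ) - 1) * (T.card : ℝ) := by
  classical
  rw [incCountAbs_eq_sum_card_filter, Nat.cast_sum]
  exact statement19_general hk fun _ hP ↦ (hfree.card_filter_forall_lt hP).le

end Paper
end
end
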